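/- arXiv:2208.07326 — 4 statements merged into one kernel-verified Lean document; each statement's English description precedes it below -/
import Mathlib

section
/- Let ρ∞ > 0, θ∞ > 0, r > 0, σ > 0 and u∞ < 0 with |u∞| > r + 2σ. Then there exist constants δ₀ > 0 and C > 0 such that: whenever 0 < Φ_b ≤ δ₀ and Φ^s : [0,∞) → ℝ satisfies 0 ≤ Φ^s(x) ≤ Φ_b for all x ≥ 0, the function ξ ↦ ∂_{ξ₁}F^s(x,ξ)/M∞(ξ)^{1/2} is differentiable in ξ = (ξ₁,ξ₂,ξ₃) for each x ≥ 0, and sup_{x ≥ 0} ( ∫_{ℝ³} |∇_ξ ( ∂_{ξ₁}F^s(x,ξ)/M∞(ξ)^{1/2} )|² dξ )^{1/2} ≤ C, where C and δ₀ are independent of Φ^s and Φ_b. -/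
open MeasureTheory Real Set Filter

/-- The Maxwellian `M∞` with parameters `ρ∞, θ∞, u∞`, where `ξ = (ξ₁, ξ₂, ξ₃)`. -/
noncomputable def Maxwellian (ρ θ u : ℝ) (ξ : ℝ × ℝ × ℝ) : ℝ :=
  ρ * (2 * π * θ) ^ (-(3:ℝ)/2) *
    Real.exp (-(((ξ.1 - u)^2 + ξ.2.1^2 + ξ.2.2^2) / (2 * θ)))

/-- The stationary profile `F^s(x,ξ) = (M∞ψ)(−√(ξ₁²−2Φ^s(x)), ξ')` for `ξ₁ < 0`,
`ξ₁² > 2Φ^s(x)`, and `0` otherwise; `ψ` is a function of `ξ₁` only. -/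
noncomputable def statF (ρ θ u : ℝ) (ψ : ℝ → ℝ) (Φs : ℝ → ℝ) (x : ℝ) (ξ : ℝ × ℝ × ℝ) : ℝ :=
  if ξ.1 < 0 ∧ 2 * Φs x < ξ.1^2 then
    Maxwellian ρ θ u (-Real.sqrt (ξ.1^2 - 2 * Φs x), ξ.2) *
      ψ (-Real.sqrt (ξ.1^2 - 2 * Φs x))
  else 0


/-- The one-dimensional factor of the stationary profile as a function of `t = ξ₁² - 2Φ^s`. -/
noncomputable def energyProfile (θ u : ℝ) (ψ : ℝ → ℝ) (t : ℝ) : ℝ :=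
  Real.exp (-((-Real.sqrt t - u)^2 / (2 * θ))) * ψ (-Real.sqrt t)

lemma energyProfile_eq_zero {θ u r : ℝ} {ψ : ℝ → ℝ} (hr : 0 < r)
    (hψa : ∀ s, -r ≤ s → ψ s = 0) {t : ℝ} (ht : t < r^2) : energyProfile θ u ψ t = 0 := by
  have h : Real.sqrt t < r := (Real.sqrt_lt' hr).2 ht
  rw [energyProfile, hψa _ (by linarith), mul_zero]

lemma energyProfile_eventuallyEq_zero {θ u r : ℝ} {ψ : ℝ → ℝ} (hr : 0 < r)
    (hψa : ∀ s, -r ≤ s → ψ s = 0) {t : ℝ} (ht : t < r^2) :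
    energyProfile θ u ψ =ᶠ[nhds t] fun _ => 0 := by
  filter_upwards [Iio_mem_nhds ht] with y hy using energyProfile_eq_zero hr hψa hy

lemma deriv_energyProfile_eq_zero {θ u r : ℝ} {ψ : ℝ → ℝ} (hr : 0 < r)
    (hψa : ∀ s, -r ≤ s → ψ s = 0) {t : ℝ} (ht : t < r^2) :
    deriv (energyProfile θ u ψ) t = 0 := by
  rw [(energyProfile_eventuallyEq_zero hr hψa ht).deriv_eq, deriv_const]

lemma deriv_deriv_energyProfile_eq_zero {θ u r : ℝ} {ψ : ℝ → ℝ} (hr : 0 < r)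
    (hψa : ∀ s, -r ≤ s → ψ s = 0) {t : ℝ} (ht : t < r^2) :
    deriv (deriv (energyProfile θ u ψ)) t = 0 := by
  have h : deriv (energyProfile θ u ψ) =ᶠ[nhds t] fun _ => 0 := by
    filter_upwards [Iio_mem_nhds ht] with y hy using deriv_energyProfile_eq_zero hr hψa hy
  rw [h.deriv_eq, deriv_const]

lemma contDiff_energyProfile {θ u r : ℝ} {ψ : ℝ → ℝ} (hr : 0 < r)
    (hψ : ContDiff ℝ (⊤ : ℕ∞) ψ) (hψa : ∀ s, -r ≤ s → ψ s = 0) :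
    ContDiff ℝ 2 (energyProfile θ u ψ) := by
  rw [contDiff_iff_contDiffAt]
  intro t
  rcases lt_or_ge t (r^2) with ht | ht
  · exact contDiffAt_const.congr_of_eventuallyEq (energyProfile_eventuallyEq_zero hr hψa ht)
  · have ht0 : t ≠ 0 := ((pow_pos hr 2).trans_le ht).ne'
    have hs : ContDiffAt ℝ 2 (fun t : ℝ => -Real.sqrt t) t := (Real.contDiffAt_sqrt ht0).neg
    have hψ2 : ContDiff ℝ 2 ψ := hψ.of_le (WithTop.coe_le_coe.2 le_top)
    exact (((hs.sub contDiffAt_const).pow 2).div_const _).neg.exp.mul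
      (hψ2.contDiffAt.comp t hs)

/-- The logarithmic derivative of `t ↦ exp(-(-√t - u)²/(2θ))`. -/
lemma hasDerivAt_exp_sqrt {θ u t : ℝ} (hθ : 0 < θ) (ht : 0 < t) :
    HasDerivAt (fun t => Real.exp (-((-Real.sqrt t - u)^2 / (2 * θ))))
      (Real.exp (-((-Real.sqrt t - u)^2 / (2 * θ))) *
        (-(1 + u * (Real.sqrt t)⁻¹) / (2 * θ))) t := by
  have hs := Real.hasDerivAt_sqrt ht.ne'
  have hp := Real.sqrt_pos.2 ht
  have h1 : HasDerivAt (fun t => -Real.sqrt t - u) (-(1 / (2 * Real.sqrt t))) t :=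
    hs.neg.sub_const u
  have h2 : HasDerivAt (fun t => -((-Real.sqrt t - u)^2 / (2 * θ)))
      (-(1 + u * (Real.sqrt t)⁻¹) / (2 * θ)) t := by
    refine ((h1.fun_pow 2).div_const (2 * θ)).fun_neg.congr_deriv ?_
    field_simp
    push_cast
    ring
  exact h2.exp

lemma hasDerivAt_exp_sqrt_snd {θ u t : ℝ} (hθ : 0 < θ) (ht : 0 < t) :
    HasDerivAt (fun t => Real.exp (-((-Real.sqrt t - u)^2 / (2 * θ))) *
        (-(1 + u * (Real.sqrt t)⁻¹) / (2 * θ)))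
      (Real.exp (-((-Real.sqrt t - u)^2 / (2 * θ))) *
        ((-(1 + u * (Real.sqrt t)⁻¹) / (2 * θ))^2 + u * (Real.sqrt t)⁻¹^3 / (4 * θ))) t := by
  have hs := Real.hasDerivAt_sqrt ht.ne'
  have hp := Real.sqrt_pos.2 ht
  have h1 : HasDerivAt (fun t => -(1 + u * (Real.sqrt t)⁻¹) / (2 * θ))
      (u * (Real.sqrt t)⁻¹^3 / (4 * θ)) t := by
    refine ((((hs.fun_inv hp.ne').const_mul u).const_add 1).fun_neg.div_const
      (2 * θ)).congr_deriv ?_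
    field_simp
    ring
  refine ((hasDerivAt_exp_sqrt (u := u) hθ ht).mul h1).congr_deriv ?_
  ring

lemma exp_neg_sq_sqrt_le {θ u t : ℝ} (hθ : 0 < θ) (ht : 0 ≤ t) :
    Real.exp (-((-Real.sqrt t - u)^2 / (2 * θ))) ≤
      Real.exp (3 * u^2 / (2 * θ)) * Real.exp (-(3 * t / (8 * θ))) := by
  rw [← Real.exp_add, Real.exp_le_exp]
  have h1 : 3 * u^2 / (2 * θ) + -(3 * t / (8 * θ)) + (-Real.sqrt t - u)^2 / (2 * θ)
      = (Real.sqrt t / 2 + 2 * u)^2 / (2 * θ) := by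
    nth_rewrite 1 [← Real.sq_sqrt ht]
    field_simp
    ring
  have h2 : 0 ≤ (Real.sqrt t / 2 + 2 * u)^2 / (2 * θ) := by positivity
  linarith

/-- A continuous function vanishing on the negative axis that decays exponentially for large
arguments decays exponentially everywhere. -/
lemma exists_exp_bound {f : ℝ → ℝ} {k T B : ℝ} (hf : Continuous f) (hf0 : ∀ t < 0, f t = 0)
    (hB : ∀ t > T, |f t| ≤ B * Real.exp (-(k * t))) :
    ∃ B' > 0, ∀ t, |f t| ≤ B' * Real.exp (-(k * t)) := by
  obtain ⟨A, hA⟩ := (isCompact_Icc (a := (0:ℝ)) (b := T)).exists_bound_of_continuousOn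
    (f := fun t => f t * Real.exp (k * t)) (by fun_prop)
  refine ⟨max 1 (max A B), by positivity, fun t => ?_⟩
  rcases lt_or_ge t 0 with h0 | h0
  · rw [hf0 t h0, abs_zero]; positivity
  rcases lt_or_ge T t with hT | hT
  · refine (hB t hT).trans ?_
    gcongr
    exact (le_max_right _ _).trans (le_max_right _ _)
  · have h := hA t ⟨h0, hT⟩
    rw [Real.norm_eq_abs, abs_mul, Real.abs_exp] at h
    rw [Real.exp_neg, ← div_eq_mul_inv, le_div_iff₀ (Real.exp_pos _)]
    exact h.trans ((le_max_left _ _).trans (le_max_right _ _))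

lemma exists_deriv_energyProfile_bound {θ u r σ : ℝ} {ψ : ℝ → ℝ} (hθ : 0 < θ) (hr : 0 < r)
    (hσ : 0 < σ) (hψ : ContDiff ℝ (⊤ : ℕ∞) ψ) (hψa : ∀ s, -r ≤ s → ψ s = 0)
    (hψb : ∀ s, s ≤ -r - σ → ψ s = 1) :
    ∃ B > 0, ∀ t, |deriv (energyProfile θ u ψ) t| ≤ B * Real.exp (-(3 / (8 * θ) * t)) ∧
      |deriv (deriv (energyProfile θ u ψ)) t| ≤ B * Real.exp (-(3 / (8 * θ) * t)) := by
  have hC := contDiff_energyProfile (θ := θ) (u := u) hr hψ hψa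
  have hC1 : ContDiff ℝ 1 (deriv (energyProfile θ u ψ)) :=
    ContDiff.deriv' (by simpa [one_add_one_eq_two] using hC)
  have hsq : 0 < r^2 := by positivity
  set R := r + σ with hR
  have hRpos : 0 < R := by positivity
  have hRt : ∀ t > R^2, R < Real.sqrt t := fun t ht => (Real.lt_sqrt hRpos.le).2 ht
  have ht0 : ∀ t > R^2, 0 < t := fun t ht => (sq_nonneg R).trans_lt ht
  have hinv : ∀ t > R^2, (Real.sqrt t)⁻¹ ≤ R⁻¹ := fun t ht => inv_anti₀ hRpos (hRt t ht).le
  have h0 : ∀ t > R^2, energyProfile θ u ψ t = Real.exp (-((-Real.sqrt t - u)^2 / (2 * θ))) := by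
    intro t ht
    rw [energyProfile, hψb _ (by linarith [hRt t ht]), mul_one]
  have h1 : ∀ t > R^2, deriv (energyProfile θ u ψ) t =
      Real.exp (-((-Real.sqrt t - u)^2 / (2 * θ))) *
        (-(1 + u * (Real.sqrt t)⁻¹) / (2 * θ)) := by
    intro t ht
    refine ((hasDerivAt_exp_sqrt hθ (ht0 t ht)).congr_of_eventuallyEq ?_).deriv
    filter_upwards [Ioi_mem_nhds ht] with y hy using h0 y hy
  have h2 : ∀ t > R^2, deriv (deriv (energyProfile θ u ψ)) t =
      Real.exp (-((-Real.sqrt t - u)^2 / (2 * θ))) *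
        ((-(1 + u * (Real.sqrt t)⁻¹) / (2 * θ))^2 + u * (Real.sqrt t)⁻¹^3 / (4 * θ)) := by
    intro t ht
    refine ((hasDerivAt_exp_sqrt_snd hθ (ht0 t ht)).congr_of_eventuallyEq ?_).deriv
    filter_upwards [Ioi_mem_nhds ht] with y hy using h1 y hy
  have hA : ∀ t > R^2, |-(1 + u * (Real.sqrt t)⁻¹) / (2 * θ)| ≤ (1 + |u| * R⁻¹) / (2 * θ) := by
    intro t ht
    rw [abs_div, abs_neg, abs_of_pos (show 0 < 2 * θ by positivity)]
    gcongr
    refine (abs_add_le _ _).trans ?_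
    rw [abs_one, abs_mul, abs_of_nonneg (inv_nonneg.2 (Real.sqrt_nonneg t))]
    gcongr
    exact (hRt t ht).le
  have hA' : ∀ t > R^2, |u * (Real.sqrt t)⁻¹^3 / (4 * θ)| ≤ |u| * R⁻¹^3 / (4 * θ) := by
    intro t ht
    rw [abs_div, abs_mul, abs_of_pos (show 0 < 4 * θ by positivity),
      abs_of_nonneg (show 0 ≤ (Real.sqrt t)⁻¹^3 by positivity)]
    have := hinv t ht
    gcongr
  have key : ∀ t, 0 < t → ∀ m M : ℝ, |m| ≤ M →
      |Real.exp (-((-Real.sqrt t - u)^2 / (2 * θ))) * m| ≤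
        Real.exp (3 * u^2 / (2 * θ)) * M * Real.exp (-(3 / (8 * θ) * t)) := by
    intro t ht m M hm
    have hM : 0 ≤ M := (abs_nonneg m).trans hm
    have := exp_neg_sq_sqrt_le (u := u) hθ ht.le
    rw [abs_mul, Real.abs_exp]
    calc _ ≤ (Real.exp (3 * u^2 / (2 * θ)) * Real.exp (-(3 * t / (8 * θ)))) * M := by gcongr
      _ = _ := by rw [show 3 / (8 * θ) * t = 3 * t / (8 * θ) by ring]; ring
  obtain ⟨B₁, hB₁, hb₁⟩ := exists_exp_bound (f := deriv (energyProfile θ u ψ)) hC1.continuous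
    (fun t ht => deriv_energyProfile_eq_zero hr hψa (ht.trans hsq))
    (fun t ht => by rw [h1 t ht]; exact key t (ht0 t ht) _ _ (hA t ht))
  obtain ⟨B₂, hB₂, hb₂⟩ := exists_exp_bound (f := deriv (deriv (energyProfile θ u ψ)))
    (hC1.continuous_deriv le_rfl)
    (fun t ht => deriv_deriv_energyProfile_eq_zero hr hψa (ht.trans hsq))
    (T := R^2) (k := 3 / (8 * θ))
    (B := Real.exp (3 * u^2 / (2 * θ)) *
      (((1 + |u| * R⁻¹) / (2 * θ))^2 + |u| * R⁻¹^3 / (4 * θ)))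
    (fun t ht => by
      rw [h2 t ht]
      refine key t (ht0 t ht) _ _ ((abs_add_le _ _).trans ?_)
      rw [abs_pow]
      gcongr
      · exact hA t ht
      · exact hA' t ht)
  refine ⟨max B₁ B₂, by positivity, fun t => ⟨(hb₁ t).trans ?_, (hb₂ t).trans ?_⟩⟩
  · gcongr; exact le_max_left _ _
  · gcongr; exact le_max_right _ _

/-- Extending by zero to `s ≥ 0` preserves derivatives if the function vanishes near `0`. -/
lemma hasDerivAt_ite_neg {f f' : ℝ → ℝ} {r : ℝ} (hr : 0 < r)
    (hf : ∀ s < 0, HasDerivAt f (f' s) s) (hf0 : ∀ s, -r < s → s < 0 → f s = 0) (s : ℝ) :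
    HasDerivAt (fun s => if s < 0 then f s else 0) (if s < 0 then f' s else 0) s := by
  split_ifs with hs
  · refine (hf s hs).congr_of_eventuallyEq ?_
    filter_upwards [Iio_mem_nhds hs] with y hy
    exact if_pos hy
  · refine (hasDerivAt_const s (0:ℝ)).congr_of_eventuallyEq ?_
    filter_upwards [Ioi_mem_nhds (show -r < s by linarith)] with y hy
    split_ifs with h
    · exact hf0 y hy h
    · rfl

/-- The energy profile evaluated along `s ↦ s² - c` for `s < 0`. -/
noncomputable def velocityProfile (θ u : ℝ) (ψ : ℝ → ℝ) (c s : ℝ) : ℝ :=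
  if s < 0 then energyProfile θ u ψ (s^2 - c) else 0

noncomputable def velocityProfileDeriv (θ u : ℝ) (ψ : ℝ → ℝ) (c s : ℝ) : ℝ :=
  if s < 0 then deriv (energyProfile θ u ψ) (s^2 - c) * (2 * s) else 0

noncomputable def velocityProfileDerivTwo (θ u : ℝ) (ψ : ℝ → ℝ) (c s : ℝ) : ℝ :=
  if s < 0 then deriv (deriv (energyProfile θ u ψ)) (s^2 - c) * (2 * s) * (2 * s) +
    deriv (energyProfile θ u ψ) (s^2 - c) * 2 else 0

lemma hasDerivAt_velocityProfile {θ u r c : ℝ} {ψ : ℝ → ℝ} (hr : 0 < r) (hc : 0 ≤ c)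
    (hψ : ContDiff ℝ (⊤ : ℕ∞) ψ) (hψa : ∀ s, -r ≤ s → ψ s = 0) (s : ℝ) :
    HasDerivAt (velocityProfile θ u ψ c) (velocityProfileDeriv θ u ψ c s) s := by
  refine hasDerivAt_ite_neg hr (f := fun s => energyProfile θ u ψ (s^2 - c))
    (f' := fun s => deriv (energyProfile θ u ψ) (s^2 - c) * (2 * s)) (fun y _ => ?_)
    (fun y h1 h2 => energyProfile_eq_zero hr hψa (by nlinarith)) s
  have hd := ((contDiff_energyProfile (θ := θ) (u := u) hr hψ hψa).differentiable
    (by norm_num)) (y^2 - c)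
  have h1 : HasDerivAt (fun s : ℝ => s^2 - c) (2 * y) y := by
    simpa using (hasDerivAt_pow 2 y).sub_const c
  exact hd.hasDerivAt.comp y h1

lemma hasDerivAt_velocityProfileDeriv {θ u r c : ℝ} {ψ : ℝ → ℝ} (hr : 0 < r) (hc : 0 ≤ c)
    (hψ : ContDiff ℝ (⊤ : ℕ∞) ψ) (hψa : ∀ s, -r ≤ s → ψ s = 0) (s : ℝ) :
    HasDerivAt (velocityProfileDeriv θ u ψ c) (velocityProfileDerivTwo θ u ψ c s) s := by
  refine hasDerivAt_ite_neg hr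
    (f := fun s => deriv (energyProfile θ u ψ) (s^2 - c) * (2 * s))
    (f' := fun s => deriv (deriv (energyProfile θ u ψ)) (s^2 - c) * (2 * s) * (2 * s) +
      deriv (energyProfile θ u ψ) (s^2 - c) * 2) (fun y _ => ?_)
    (fun y h1 h2 => by rw [deriv_energyProfile_eq_zero hr hψa (by nlinarith), zero_mul]) s
  have hC1 : ContDiff ℝ 1 (deriv (energyProfile θ u ψ)) :=
    ContDiff.deriv' (by simpa [one_add_one_eq_two] using
      contDiff_energyProfile (θ := θ) (u := u) hr hψ hψa)
  have hd := (hC1.differentiable (by norm_num)) (y^2 - c)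
  have h1 : HasDerivAt (fun s : ℝ => s^2 - c) (2 * y) y := by
    simpa using (hasDerivAt_pow 2 y).sub_const c
  have h2 : HasDerivAt (fun s : ℝ => 2 * s) 2 y := by
    simpa using (hasDerivAt_id y).const_mul 2
  exact (hd.hasDerivAt.comp y h1).mul h2

lemma statF_eq {ρ θ u r : ℝ} {ψ Φs : ℝ → ℝ} {x : ℝ} (hr : 0 < r)
    (hψa : ∀ s, -r ≤ s → ψ s = 0) (s : ℝ) (η : ℝ × ℝ) :
    statF ρ θ u ψ Φs x (s, η) =
      ρ * (2 * π * θ) ^ (-(3:ℝ)/2) * Real.exp (-((η.1^2 + η.2^2) / (2 * θ))) *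
        velocityProfile θ u ψ (2 * Φs x) s := by
  by_cases hs : s < 0
  · by_cases hc : 2 * Φs x < s^2
    · rw [statF, if_pos ⟨hs, hc⟩, velocityProfile, if_pos hs, energyProfile, Maxwellian]
      simp only
      rw [show -(((-√(s ^ 2 - 2 * Φs x) - u) ^ 2 + η.1 ^ 2 + η.2 ^ 2) / (2 * θ)) =
        -((η.1^2 + η.2^2) / (2 * θ)) + -((-√(s ^ 2 - 2 * Φs x) - u) ^ 2 / (2 * θ)) by ring,
        Real.exp_add]
      ring
    · rw [statF, if_neg (fun h => hc h.2), velocityProfile, if_pos hs,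
        energyProfile_eq_zero hr hψa (by nlinarith), mul_zero]
  · rw [statF, if_neg (fun h => hs h.1), velocityProfile, if_neg hs, mul_zero]

lemma sqrt_maxwellian {ρ θ u : ℝ} (hρ : 0 < ρ) (hθ : 0 < θ) (η : ℝ × ℝ × ℝ) :
    Real.sqrt (Maxwellian ρ θ u η) = Real.sqrt (ρ * (2 * π * θ) ^ (-(3:ℝ)/2)) *
      Real.exp (-((η.1 - u)^2 / (4 * θ))) * Real.exp (-((η.2.1^2 + η.2.2^2) / (4 * θ))) := by
  rw [Maxwellian, Real.sqrt_mul (by positivity), ← Real.exp_half,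
    mul_assoc (Real.sqrt _), ← Real.exp_add]
  congr 2
  field_simp
  ring

/-- The weighted first derivative of the profile, as a function of `ξ₁` only. -/
noncomputable def weightedDeriv (θ u : ℝ) (ψ : ℝ → ℝ) (c s : ℝ) : ℝ :=
  velocityProfileDeriv θ u ψ c s * Real.exp ((s - u)^2 / (4 * θ))

noncomputable def weightedDerivDeriv (θ u : ℝ) (ψ : ℝ → ℝ) (c s : ℝ) : ℝ :=
  velocityProfileDerivTwo θ u ψ c s * Real.exp ((s - u)^2 / (4 * θ)) +
    velocityProfileDeriv θ u ψ c s * (Real.exp ((s - u)^2 / (4 * θ)) * ((s - u) / (2 * θ)))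

lemma hasDerivAt_weightedDeriv {θ u r c : ℝ} {ψ : ℝ → ℝ} (hθ : 0 < θ) (hr : 0 < r) (hc : 0 ≤ c)
    (hψ : ContDiff ℝ (⊤ : ℕ∞) ψ) (hψa : ∀ s, -r ≤ s → ψ s = 0) (s : ℝ) :
    HasDerivAt (weightedDeriv θ u ψ c) (weightedDerivDeriv θ u ψ c s) s := by
  refine (hasDerivAt_velocityProfileDeriv hr hc hψ hψa s).mul ?_
  have h1 : HasDerivAt (fun s => (s - u)^2 / (4 * θ)) ((s - u) / (2 * θ)) s := by
    refine ((((hasDerivAt_id' s).sub_const u).fun_pow 2).div_const (4 * θ)).congr_deriv ?_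
    field_simp
    push_cast
    ring
  exact h1.exp

lemma deriv_statF_div {ρ θ u r : ℝ} {ψ Φs : ℝ → ℝ} {x : ℝ} (hρ : 0 < ρ) (hθ : 0 < θ)
    (hr : 0 < r) (hψ : ContDiff ℝ (⊤ : ℕ∞) ψ) (hψa : ∀ s, -r ≤ s → ψ s = 0)
    (hΦ : 0 ≤ Φs x) (η : ℝ × ℝ × ℝ) :
    deriv (fun s => statF ρ θ u ψ Φs x (s, η.2)) η.1 / Real.sqrt (Maxwellian ρ θ u η) =
      Real.sqrt (ρ * (2 * π * θ) ^ (-(3:ℝ)/2)) * weightedDeriv θ u ψ (2 * Φs x) η.1 *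
        (Real.exp (-(η.2.1^2 / (4 * θ))) * Real.exp (-(η.2.2^2 / (4 * θ)))) := by
  simp only [statF_eq hr hψa]
  rw [((hasDerivAt_velocityProfile hr (by positivity) hψ hψa η.1).const_mul _).deriv,
    sqrt_maxwellian hρ hθ, weightedDeriv]
  set K := ρ * (2 * π * θ) ^ (-(3:ℝ)/2) with hK
  have hKpos : 0 < K := by positivity
  have hs := Real.sqrt_pos.2 hKpos
  have e1 : Real.exp (-((η.2.1^2 + η.2.2^2) / (2 * θ))) =
      Real.exp (-((η.2.1^2 + η.2.2^2) / (4 * θ))) *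
      (Real.exp (-(η.2.1^2 / (4 * θ))) * Real.exp (-(η.2.2^2 / (4 * θ)))) := by
    rw [← Real.exp_add, ← Real.exp_add]; congr 1; field_simp; ring
  have e2 := Real.exp_pos ((η.1 - u)^2 / (4 * θ))
  have e3 := Real.exp_pos (-((η.2.1^2 + η.2.2^2) / (4 * θ)))
  rw [e1, Real.exp_neg ((η.1 - u)^2 / (4 * θ)), div_eq_iff (by positivity)]
  nth_rewrite 1 [← Real.mul_self_sqrt hKpos.le]
  field_simp

/-- Gradient of a product of functions of the separate coordinates. -/
lemma exists_hasFDerivAt_mul_mul {p q q₂ : ℝ → ℝ} {p' q' q₂' b₁ b₂ b₃ : ℝ} {ξ : ℝ × ℝ × ℝ}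
    (hp : HasDerivAt p p' ξ.1) (hq : HasDerivAt q q' ξ.2.1) (hq₂ : HasDerivAt q₂ q₂' ξ.2.2)
    (h1 : |p ξ.1| ≤ b₁) (h1' : |p'| ≤ b₁) (h2 : |q ξ.2.1| ≤ b₂) (h2' : |q'| ≤ b₂)
    (h3 : |q₂ ξ.2.2| ≤ b₃) (h3' : |q₂'| ≤ b₃) :
    ∃ L : ℝ × ℝ × ℝ →L[ℝ] ℝ,
      HasFDerivAt (fun η : ℝ × ℝ × ℝ => p η.1 * (q η.2.1 * q₂ η.2.2)) L ξ ∧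
        ‖L‖ ≤ 3 * (b₁ * b₂ * b₃) := by
  have f1 : HasFDerivAt (fun η : ℝ × ℝ × ℝ => η.1) (ContinuousLinearMap.fst ℝ ℝ (ℝ × ℝ)) ξ :=
    hasFDerivAt_fst
  have f2 : HasFDerivAt (fun η : ℝ × ℝ × ℝ => η.2.1)
      ((ContinuousLinearMap.fst ℝ ℝ ℝ).comp (ContinuousLinearMap.snd ℝ ℝ (ℝ × ℝ))) ξ :=
    hasFDerivAt_fst.comp ξ hasFDerivAt_snd
  have f3 : HasFDerivAt (fun η : ℝ × ℝ × ℝ => η.2.2)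
      ((ContinuousLinearMap.snd ℝ ℝ ℝ).comp (ContinuousLinearMap.snd ℝ ℝ (ℝ × ℝ))) ξ :=
    hasFDerivAt_snd.comp ξ hasFDerivAt_snd
  have hb₁ := (abs_nonneg _).trans h1
  have hb₂ := (abs_nonneg _).trans h2
  have hb₃ := (abs_nonneg _).trans h3
  refine ⟨_, (hp.comp_hasFDerivAt ξ f1).mul
    ((hq.comp_hasFDerivAt ξ f2).mul (hq₂.comp_hasFDerivAt ξ f3)), ?_⟩
  refine ContinuousLinearMap.opNorm_le_bound _ (by positivity) fun v => ?_
  have v1 : |v.1| ≤ ‖v‖ := norm_fst_le v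
  have v2 : |v.2.1| ≤ ‖v‖ := (norm_fst_le v.2).trans (norm_snd_le v)
  have v3 : |v.2.2| ≤ ‖v‖ := (norm_snd_le v.2).trans (norm_snd_le v)
  have e : ∀ a b c d B₁ B₂ B₃ : ℝ, |a| ≤ B₁ → |b| ≤ B₂ → |c| ≤ B₃ → |d| ≤ ‖v‖ →
      |a * b * c * d| ≤ B₁ * B₂ * B₃ * ‖v‖ := by
    intro a b c d B₁ B₂ B₃ ha hb hc hd
    have := (abs_nonneg a).trans ha
    have := (abs_nonneg b).trans hb
    have := (abs_nonneg c).trans hc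
    rw [abs_mul, abs_mul, abs_mul]
    gcongr
  have t1 := e _ _ _ v.1 _ _ _ h1' h2 h3 v1
  have t2 := e _ _ _ v.2.1 _ _ _ h1 h2' h3 v2
  have t3 := e _ _ _ v.2.2 _ _ _ h1 h2 h3' v3
  simp only [add_apply, smul_apply, smul_eq_mul,
    ContinuousLinearMap.comp_apply, ContinuousLinearMap.coe_fst', ContinuousLinearMap.coe_snd',
    Function.comp_apply, Real.norm_eq_abs]
  rw [abs_le] at *
  constructor <;> nlinarith [t1.1, t1.2, t2.1, t2.2, t3.1, t3.2]

lemma one_add_sq_le_exp {k : ℝ} (hk : 0 < k) (s : ℝ) :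
    1 + s^2 ≤ (1 + k) * Real.exp (s^2 / k) := by
  have h := Real.add_one_le_exp (s^2 / k)
  have h0 : 0 ≤ s^2 / k := by positivity
  have h1 : s^2 = k * (s^2 / k) := by field_simp
  nlinarith

lemma abs_le_one_add_sq (s : ℝ) : |s| ≤ 1 + s^2 := by
  rw [← sq_abs s]; nlinarith [sq_nonneg (|s| - 1)]

lemma exp_weight_le {θ : ℝ} (hθ : 0 < θ) (u s : ℝ) :
    Real.exp ((s - u)^2 / (4 * θ)) ≤
      Real.exp (5 * u^2 / (4 * θ)) * Real.exp (10 * (s^2 / (32 * θ))) := by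
  rw [← Real.exp_add, Real.exp_le_exp]
  have h1 : 5 * u^2 / (4 * θ) + 10 * (s^2 / (32 * θ)) - (s - u)^2 / (4 * θ)
      = (s / 2 + 2 * u)^2 / (4 * θ) := by
    field_simp
    ring
  have h2 : 0 ≤ (s / 2 + 2 * u)^2 / (4 * θ) := by positivity
  linarith

lemma exists_weightedDeriv_bound {θ u r σ : ℝ} {ψ : ℝ → ℝ} (hθ : 0 < θ) (hr : 0 < r)
    (hσ : 0 < σ) (hψ : ContDiff ℝ (⊤ : ℕ∞) ψ) (hψa : ∀ s, -r ≤ s → ψ s = 0)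
    (hψb : ∀ s, s ≤ -r - σ → ψ s = 1) :
    ∃ M > 0, ∀ c ≤ 2, ∀ s,
      |weightedDeriv θ u ψ c s| ≤ M * Real.exp (-(s^2 / (32 * θ))) ∧
      |weightedDerivDeriv θ u ψ c s| ≤ M * Real.exp (-(s^2 / (32 * θ))) := by
  obtain ⟨B, hB, hb⟩ := exists_deriv_energyProfile_bound (u := u) hθ hr hσ hψ hψa hψb
  set A := B * Real.exp (3 / (8 * θ) * 2) with hA
  have hApos : 0 < A := by positivity
  set W := Real.exp (5 * u^2 / (4 * θ)) with hW
  have hWpos : 0 < W := Real.exp_pos _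
  set N := 6 + (2 + 2 * |u|) / (2 * θ) with hN
  have hNpos : 0 < N := by positivity
  have hdecay : ∀ c ≤ 2, ∀ s : ℝ, B * Real.exp (-(3 / (8 * θ) * (s^2 - c))) ≤
      A * Real.exp (-(12 * (s^2 / (32 * θ)))) := by
    intro c hc s
    rw [hA, mul_assoc, ← Real.exp_add]
    gcongr
    have h1 : 3 / (8 * θ) * 2 + -(12 * (s^2 / (32 * θ))) - -(3 / (8 * θ) * (s^2 - c)) =
        3 / (8 * θ) * (2 - c) := by
      field_simp; ring
    have h2 : 0 ≤ 3 / (8 * θ) * (2 - c) := mul_nonneg (by positivity) (by linarith)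
    linarith
  have hD : ∀ c ≤ 2, ∀ s, |velocityProfileDeriv θ u ψ c s| ≤
      A * Real.exp (-(12 * (s^2 / (32 * θ)))) * (2 * |s|) := by
    intro c hc s
    rw [velocityProfileDeriv]
    split_ifs with hs
    · rw [abs_mul, abs_mul 2 s, abs_two]
      gcongr
      exact (hb _).1.trans (hdecay c hc s)
    · rw [abs_zero]; positivity
  have hD2 : ∀ c ≤ 2, ∀ s, |velocityProfileDerivTwo θ u ψ c s| ≤
      A * Real.exp (-(12 * (s^2 / (32 * θ)))) * (4 * s^2 + 2) := by
    intro c hc s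
    rw [velocityProfileDerivTwo]
    split_ifs with hs
    · refine (abs_add_le _ _).trans ?_
      rw [mul_assoc, show 2 * s * (2 * s) = 4 * s^2 by ring, abs_mul, abs_mul _ 2, abs_two,
        abs_of_nonneg (show 0 ≤ 4 * s^2 by positivity), mul_add]
      gcongr
      · exact (hb _).2.trans (hdecay c hc s)
      · exact (hb _).1.trans (hdecay c hc s)
    · rw [abs_zero]; positivity
  have hfin : ∀ s P : ℝ, 0 ≤ P → P ≤ N * (1 + s^2) →
      A * Real.exp (-(12 * (s^2 / (32 * θ)))) * P *
        (W * Real.exp (10 * (s^2 / (32 * θ)))) ≤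
      A * W * N * (1 + 32 * θ) * Real.exp (-(s^2 / (32 * θ))) := by
    intro s P hP0 hP
    have h1 := one_add_sq_le_exp (show 0 < 32 * θ by positivity) s
    have e : Real.exp (-(12 * (s^2 / (32 * θ)))) * Real.exp (10 * (s^2 / (32 * θ))) *
        Real.exp (s^2 / (32 * θ)) = Real.exp (-(s^2 / (32 * θ))) := by
      rw [← Real.exp_add, ← Real.exp_add]; congr 1; ring
    calc _ ≤ A * Real.exp (-(12 * (s^2 / (32 * θ)))) *
          (N * ((1 + 32 * θ) * Real.exp (s^2 / (32 * θ)))) *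
          (W * Real.exp (10 * (s^2 / (32 * θ)))) := by
          gcongr
          exact hP.trans (by gcongr)
      _ = _ := by rw [← e]; ring
  refine ⟨A * W * N * (1 + 32 * θ), by positivity, fun c hc s => ⟨?_, ?_⟩⟩
  · rw [weightedDeriv, abs_mul, Real.abs_exp]
    refine le_trans ?_ (hfin s (2 * |s|) (by positivity) ?_)
    · gcongr
      · exact hD c hc s
      · exact exp_weight_le hθ u s
    · have := abs_le_one_add_sq s
      have h6 : 6 ≤ N := by rw [hN]; linarith [show 0 ≤ (2 + 2 * |u|) / (2 * θ) by positivity]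
      nlinarith [sq_nonneg s]
  · have hw : |s - u| ≤ |s| + |u| := abs_sub s u
    have hrw : weightedDerivDeriv θ u ψ c s = (velocityProfileDerivTwo θ u ψ c s +
        velocityProfileDeriv θ u ψ c s * ((s - u) / (2 * θ))) *
          Real.exp ((s - u)^2 / (4 * θ)) := by
      rw [weightedDerivDeriv]; ring
    rw [hrw, abs_mul, Real.abs_exp]
    refine le_trans ?_ (hfin s (4 * s^2 + 2 + 2 * |s| * ((|s| + |u|) / (2 * θ)))
      (by positivity) ?_)
    · gcongr
      · refine (abs_add_le _ _).trans ?_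
        rw [mul_add, abs_mul, abs_div, abs_of_pos (show 0 < 2 * θ by positivity), ← mul_assoc]
        gcongr
        · exact hD2 c hc s
        · exact hD c hc s
      · exact exp_weight_le hθ u s
    · have h1 := abs_le_one_add_sq s
      have h2 : 2 * |s| * (|s| + |u|) ≤ (2 + 2 * |u|) * (1 + s^2) := by
        nlinarith [sq_abs s, abs_nonneg u, abs_nonneg s]
      have h3 : 2 * |s| * ((|s| + |u|) / (2 * θ)) ≤ (2 + 2 * |u|) / (2 * θ) * (1 + s^2) := by
        rw [← mul_div_assoc, div_mul_eq_mul_div]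
        gcongr
      rw [hN]
      nlinarith [sq_nonneg s]

lemma hasDerivAt_exp_neg_sq {θ : ℝ} (hθ : 0 < θ) (y : ℝ) :
    HasDerivAt (fun y => Real.exp (-(y^2 / (4 * θ))))
      (Real.exp (-(y^2 / (4 * θ))) * (-(y / (2 * θ)))) y := by
  have h1 : HasDerivAt (fun y => -(y^2 / (4 * θ))) (-(y / (2 * θ))) y := by
    refine ((hasDerivAt_pow 2 y).div_const (4 * θ)).fun_neg.congr_deriv ?_
    field_simp
    push_cast
    ring
  exact h1.exp

lemma exists_exp_neg_sq_bound {θ : ℝ} (hθ : 0 < θ) :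
    ∃ Q > 0, ∀ y : ℝ, |Real.exp (-(y^2 / (4 * θ)))| ≤ Q * Real.exp (-(y^2 / (32 * θ))) ∧
      |Real.exp (-(y^2 / (4 * θ))) * (-(y / (2 * θ)))| ≤ Q * Real.exp (-(y^2 / (32 * θ))) := by
  have hfin : ∀ y : ℝ, Real.exp (-(y^2 / (4 * θ))) * (1 + y^2) ≤
      (1 + 32 * θ) * Real.exp (-(y^2 / (32 * θ))) := by
    intro y
    have h1 := one_add_sq_le_exp (show 0 < 32 * θ by positivity) y
    have h0 : 0 ≤ y^2 / (32 * θ) := by positivity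
    have e : Real.exp (-(y^2 / (4 * θ))) * Real.exp (y^2 / (32 * θ)) ≤
        Real.exp (-(y^2 / (32 * θ))) := by
      rw [← Real.exp_add, Real.exp_le_exp,
        show y^2 / (4 * θ) = 8 * (y^2 / (32 * θ)) by field_simp; ring]
      linarith
    calc _ ≤ Real.exp (-(y^2 / (4 * θ))) * ((1 + 32 * θ) * Real.exp (y^2 / (32 * θ))) := by
          gcongr
      _ = (1 + 32 * θ) * (Real.exp (-(y^2 / (4 * θ))) * Real.exp (y^2 / (32 * θ))) := by ring
      _ ≤ _ := by gcongr
  refine ⟨(1 + 1 / (2 * θ)) * (1 + 32 * θ), by positivity, fun y => ⟨?_, ?_⟩⟩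
  · rw [Real.abs_exp, mul_assoc]
    refine le_trans ?_ (mul_le_mul_of_nonneg_left (hfin y) (by positivity))
    have h1 : 0 ≤ 1 / (2 * θ) := by positivity
    nlinarith [Real.exp_pos (-(y^2 / (4 * θ))), sq_nonneg y,
      mul_nonneg (Real.exp_pos (-(y^2 / (4 * θ)))).le (sq_nonneg y),
      mul_nonneg h1 (mul_nonneg (Real.exp_pos (-(y^2 / (4 * θ)))).le
        (show 0 ≤ 1 + y^2 by positivity))]
  · rw [abs_mul, Real.abs_exp, abs_neg, abs_div, abs_of_pos (show 0 < 2 * θ by positivity),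
      mul_assoc]
    refine le_trans ?_ (mul_le_mul_of_nonneg_left (hfin y) (by positivity))
    have h1 := abs_le_one_add_sq y
    have h2 : |y| / (2 * θ) ≤ (1 + 1 / (2 * θ)) * (1 + y^2) := by
      rw [add_mul, one_div_mul_eq_div]
      have : |y| / (2 * θ) ≤ (1 + y^2) / (2 * θ) := by gcongr
      nlinarith [sq_nonneg y]
    calc _ ≤ Real.exp (-(y^2 / (4 * θ))) * ((1 + 1 / (2 * θ)) * (1 + y^2)) := by gcongr
      _ = _ := by ring

lemma integrable_exp_neg_sq_div {k : ℝ} (hk : 0 < k) :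
    Integrable fun y : ℝ => Real.exp (-(y^2 / k))^2 := by
  refine (integrable_exp_neg_mul_sq (show 0 < 2 / k by positivity)).congr
    (Eventually.of_forall fun y => ?_)
  simp only
  rw [← Real.exp_nat_mul]
  congr 1
  push_cast
  ring

/-- `sup_{x ≥ 0} ‖∇_ξ(∂_{ξ₁}F^s/M∞^{1/2})(x,·)‖_{L²_ξ} ≤ C`. -/
theorem stationary_xi_gradient_bound
    (ρ θ r σ u : ℝ) (hρ : 0 < ρ) (hθ : 0 < θ) (hr : 0 < r) (hσ : 0 < σ)
    (hu : u < 0) (hu2 : r + 2*σ < |u|)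
    (ψ : ℝ → ℝ) (hψ : ContDiff ℝ (⊤ : ℕ∞) ψ) (hψ0 : ∀ s, 0 ≤ ψ s) (hψ1 : ∀ s, ψ s ≤ 1)
    (hψa : ∀ s, -r ≤ s → ψ s = 0) (hψb : ∀ s, s ≤ -r - σ → ψ s = 1) :
    ∃ δ₀ > 0, ∃ C > 0, ∀ (Φb : ℝ) (Φs : ℝ → ℝ),
      0 < Φb → Φb ≤ δ₀ → (∀ x ≥ (0:ℝ), 0 ≤ Φs x ∧ Φs x ≤ Φb) →
      ∀ x ≥ (0:ℝ),
        (∀ ξ : ℝ × ℝ × ℝ, DifferentiableAt ℝ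
          (fun s => statF ρ θ u ψ Φs x (s, ξ.2)) ξ.1) ∧
        (∀ ξ : ℝ × ℝ × ℝ, DifferentiableAt ℝ
          (fun η : ℝ × ℝ × ℝ => deriv (fun s => statF ρ θ u ψ Φs x (s, η.2)) η.1 /
            Real.sqrt (Maxwellian ρ θ u η)) ξ) ∧
        Real.sqrt (∫ ξ : ℝ × ℝ × ℝ,
            ‖fderiv ℝ (fun η : ℝ × ℝ × ℝ =>
              deriv (fun s => statF ρ θ u ψ Φs x (s, η.2)) η.1 /
                Real.sqrt (Maxwellian ρ θ u η)) ξ‖^2)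
          ≤ C := by
  obtain ⟨M, hM, hMb⟩ := exists_weightedDeriv_bound (u := u) hθ hr hσ hψ hψa hψb
  obtain ⟨Q, hQ, hQb⟩ := exists_exp_neg_sq_bound hθ
  set K := Real.sqrt (ρ * (2 * π * θ) ^ (-(3:ℝ)/2)) with hK
  have hK0 : 0 ≤ K := Real.sqrt_nonneg _
  set e : ℝ → ℝ := fun y => Real.exp (-(y^2 / (32 * θ))) with he
  set b : ℝ × ℝ × ℝ → ℝ :=
    fun ξ => (3 * (K * M * Q * Q))^2 * (e ξ.1^2 * (e ξ.2.1^2 * e ξ.2.2^2)) with hbdef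
  have hint : Integrable b := by
    have h1 := integrable_exp_neg_sq_div (show 0 < 32 * θ by positivity)
    exact (h1.mul_prod (h1.mul_prod h1)).const_mul _
  refine ⟨1, one_pos, Real.sqrt (∫ ξ, b ξ) + 1, by positivity, ?_⟩
  intro Φb Φs _ hΦb hΦ x hx
  have hΦ0 := (hΦ x hx).1
  have hc : 2 * Φs x ≤ 2 := by linarith [(hΦ x hx).2]
  have hfun : (fun η : ℝ × ℝ × ℝ => deriv (fun s => statF ρ θ u ψ Φs x (s, η.2)) η.1 /
      Real.sqrt (Maxwellian ρ θ u η)) = fun η =>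
      (fun s => K * weightedDeriv θ u ψ (2 * Φs x) s) η.1 *
        ((fun y => Real.exp (-(y^2 / (4 * θ)))) η.2.1 *
          (fun y => Real.exp (-(y^2 / (4 * θ)))) η.2.2) :=
    funext fun η => deriv_statF_div hρ hθ hr hψ hψa hΦ0 η
  have hgrad : ∀ ξ : ℝ × ℝ × ℝ, ∃ L : ℝ × ℝ × ℝ →L[ℝ] ℝ,
      HasFDerivAt (fun η : ℝ × ℝ × ℝ => deriv (fun s => statF ρ θ u ψ Φs x (s, η.2)) η.1 /
        Real.sqrt (Maxwellian ρ θ u η)) L ξ ∧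
      ‖L‖ ≤ 3 * (K * (M * e ξ.1) * (Q * e ξ.2.1) * (Q * e ξ.2.2)) := by
    intro ξ
    rw [hfun]
    refine exists_hasFDerivAt_mul_mul
      ((hasDerivAt_weightedDeriv hθ hr (by positivity) hψ hψa ξ.1).const_mul K)
      (hasDerivAt_exp_neg_sq hθ ξ.2.1) (hasDerivAt_exp_neg_sq hθ ξ.2.2) ?_ ?_
      (hQb _).1 (hQb _).2 (hQb _).1 (hQb _).2
    · rw [abs_mul, abs_of_nonneg hK0]
      exact mul_le_mul_of_nonneg_left (hMb _ hc _).1 hK0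
    · rw [abs_mul, abs_of_nonneg hK0]
      exact mul_le_mul_of_nonneg_left (hMb _ hc _).2 hK0
  refine ⟨fun ξ => ?_, fun ξ => ?_, ?_⟩
  · simp only [statF_eq hr hψa]
    exact ((hasDerivAt_velocityProfile hr (by positivity) hψ hψa ξ.1).const_mul _).differentiableAt
  · obtain ⟨L, hL, -⟩ := hgrad ξ
    exact hL.differentiableAt
  · refine le_trans (Real.sqrt_le_sqrt ?_) (le_add_of_nonneg_right zero_le_one)
    refine integral_mono_of_nonneg (Eventually.of_forall fun ξ => by positivity) hint
      (Eventually.of_forall fun ξ => ?_)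
    obtain ⟨L, hL, hLb⟩ := hgrad ξ
    simp only [hL.fderiv]
    calc ‖L‖^2 ≤ (3 * (K * (M * e ξ.1) * (Q * e ξ.2.1) * (Q * e ξ.2.2)))^2 := by gcongr
      _ = b ξ := by rw [hbdef]; ring
end

section
/- Let n_e ∈ C²(ℝ) satisfy n_e(0) = 1, n_e'(0) = −1, and n_e'(Φ) < 0 for all Φ ∈ ℝ, and let β ∈ (0,1). Then there exist constants δ₀ > 0 and C > 0, both independent of β, such that the following holds. Let Φ_b > 0 and let Φ^s ∈ C¹([0,∞)) satisfy 0 ≤ Φ^s(x) ≤ Φ_b and |∂_xΦ^s(x)| ≤ Φ_b for all x ≥ 0; let n ∈ C¹([0,∞)) with ∫₀^∞ e^{βx}(|n|² + |∂_x n|²) dx < ∞; and let φ ∈ C³([0,∞)) solve ∂_{xx}φ = n − (n_e(Φ^s + φ) − n_e(Φ^s)) on (0,∞) with φ(0) = 0, lim_{x→∞} φ(x) = 0 and ∫₀^∞ e^{βx} Σ_{j=0}^{3} |∂_x^j φ|² dx < ∞. If Φ_b + ( ∫₀^∞ (|n|² + |∂_x n|²) dx )^{1/2} ≤ δ₀,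 then for k = 0 and k = 1: Σ_{j=0}^{2} ∫₀^∞ e^{βx} |∂_x^{k+j} φ|² dx ≤ C Σ_{i=0}^{k} ∫₀^∞ e^{βx} |∂_x^i n|² dx. -/
open MeasureTheory Real Set Filter

/-- Near a point where a `C²` function has derivative `-1`, its increments are close to those of
`-id`, and its derivative is bounded and Lipschitz. -/
lemma increment_bounds_of_deriv_eq_neg_one (f : ℝ → ℝ) (hf : ContDiff ℝ 2 f)
    (hf1 : deriv f 0 = -1) :
    ∃ r > 0, r ≤ 1 ∧ ∃ M, 0 ≤ M ∧ ∀ s t, |s| ≤ r → |t| ≤ r →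
      |f (s + t) - f s + t| ≤ |t| / 4 ∧ |deriv f (s + t) - deriv f s| ≤ M * |t| ∧
        |deriv f (s + t)| ≤ 5 / 4 := by
  have hd : ContDiff ℝ 1 (deriv f) := ContDiff.deriv' (by rwa [one_add_one_eq_two])
  have hfd : Differentiable ℝ f := hf.differentiable (by norm_num)
  have hc : Continuous (deriv f) := hd.continuous
  obtain ⟨ε, hε, hball⟩ := Metric.continuousAt_iff.1 (hc.continuousAt (x := 0)) (1 / 4) (by norm_num)
  obtain ⟨M, hM⟩ := (isCompact_Icc (a := (-2 : ℝ)) (b := 2)).exists_bound_of_continuousOn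
    (hd.continuous_deriv le_rfl).continuousOn
  refine ⟨min (ε / 4) 1, by positivity, min_le_right _ _, max M 0, le_max_right _ _, ?_⟩
  intro s t hs ht
  have hr1 := min_le_left (ε / 4) 1
  have hr2 := min_le_right (ε / 4) (1 : ℝ)
  set r := min (ε / 4) 1
  rw [abs_le] at hs ht
  have hnear : ∀ y ∈ Icc (-(2 * r)) (2 * r), |deriv f y + 1| ≤ 1 / 4 := by
    intro y hy
    have h := @hball y (by
      rw [Real.dist_eq, sub_zero, abs_lt]
      constructor <;> linarith [hy.1, hy.2])
    rw [Real.dist_eq, hf1, sub_neg_eq_add] at h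
    exact h.le
  have hs' : s ∈ Icc (-(2 * r)) (2 * r) := ⟨by linarith, by linarith⟩
  have hst : s + t ∈ Icc (-(2 * r)) (2 * r) := ⟨by linarith, by linarith⟩
  refine ⟨?_, ?_, ?_⟩
  · have h := Convex.norm_image_sub_le_of_norm_hasDerivWithin_le
      (f := fun y => f y + y) (f' := fun y => deriv f y + 1) (C := 1 / 4)
      (fun y _ => ((hfd y).hasDerivAt.add (hasDerivAt_id y)).hasDerivWithinAt)
      (fun y hy => hnear y hy) (convex_Icc _ _) hs' hst
    simp only [Real.norm_eq_abs] at h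
    rw [show f (s + t) - f s + t = f (s + t) + (s + t) - (f s + s) by ring]
    rw [show s + t - s = t by ring] at h
    linarith
  · have h := Convex.norm_image_sub_le_of_norm_deriv_le (f := deriv f) (C := max M 0)
      (s := Icc (-(2 * r)) (2 * r))
      (fun y _ => hd.differentiable one_ne_zero y)
      (fun y hy => (hM y ⟨by linarith [hy.1], by linarith [hy.2]⟩).trans (le_max_left _ _))
      (convex_Icc _ _) hs' hst
    simpa only [Real.norm_eq_abs, add_sub_cancel_left] using h
  · have h := abs_le.1 (hnear _ hst)
    rw [abs_le]
    constructor <;> linarith [h.1, h.2]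

/-- Integrability of `f` from finiteness of the lower integral of a dominating function. -/
lemma integrableOn_Ioi_of_abs_le_of_lintegral_lt_top {f g : ℝ → ℝ} (hf : Continuous f)
    (hg : Continuous g) (hfg : ∀ x > (0 : ℝ), |f x| ≤ g x)
    (hfin : ∫⁻ x in Ioi (0 : ℝ), ENNReal.ofReal (g x) < ⊤) : IntegrableOn f (Ioi 0) := by
  have hg0 : 0 ≤ᵐ[volume.restrict (Ioi (0 : ℝ))] g :=
    (ae_restrict_mem measurableSet_Ioi).mono fun x hx => (abs_nonneg _).trans (hfg x hx)
  have hgi : IntegrableOn g (Ioi 0) :=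
    ⟨hg.aestronglyMeasurable, (hasFiniteIntegral_iff_ofReal hg0).2 hfin⟩
  exact Integrable.mono' hgi hf.aestronglyMeasurable
    ((ae_restrict_mem measurableSet_Ioi).mono fun x hx => hfg x hx)

/-- One-dimensional Sobolev inequality on the half-line. -/
lemma sq_le_integral_Ioi_sq_add_deriv_sq {n : ℝ → ℝ} (hn : ContDiff ℝ 1 n)
    (hint : IntegrableOn (fun x => n x ^ 2 + deriv n x ^ 2) (Ioi 0)) {x : ℝ} (hx : 0 ≤ x) :
    n x ^ 2 ≤ ∫ y in Ioi (0 : ℝ), (n y ^ 2 + deriv n y ^ 2) := by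
  have hnc := hn.continuous
  have hn'c : Continuous (deriv n) := hn.continuous_deriv le_rfl
  have hder : ∀ y, HasDerivAt (fun y => n y ^ 2) (2 * n y * deriv n y) y := fun y =>
    ((hn.differentiable one_ne_zero y).hasDerivAt.fun_pow 2).congr_deriv (by norm_num)
  have hsub : Ioi x ⊆ Ioi (0 : ℝ) := Ioi_subset_Ioi hx
  have hintx := hint.mono_set hsub
  have hi' : IntegrableOn (fun y => 2 * n y * deriv n y) (Ioi x) :=
    Integrable.mono' hintx (by fun_prop) (Eventually.of_forall fun y => by
      rw [Real.norm_eq_abs, abs_le]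
      constructor <;> nlinarith [sq_nonneg (n y + deriv n y), sq_nonneg (n y - deriv n y)])
  have hi : IntegrableOn (fun y => n y ^ 2) (Ioi x) :=
    Integrable.mono' hintx (by fun_prop) (Eventually.of_forall fun y => by
      rw [Real.norm_eq_abs, abs_of_nonneg (sq_nonneg _)]
      linarith [sq_nonneg (deriv n y)])
  have hlim := tendsto_zero_of_hasDerivAt_of_integrableOn_Ioi (fun y _ => hder y) hi' hi
  have hFTC := integral_Ioi_of_hasDerivAt_of_tendsto (hder x).continuousAt.continuousWithinAt
    (fun y _ => hder y) hi' hlim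
  have h1 : ∫ y in Ioi x, -(2 * n y * deriv n y) ≤ ∫ y in Ioi x, (n y ^ 2 + deriv n y ^ 2) :=
    integral_mono hi'.neg hintx fun y => by
      change -(2 * n y * deriv n y) ≤ n y ^ 2 + deriv n y ^ 2
      nlinarith [sq_nonneg (n y + deriv n y)]
  rw [integral_neg, hFTC] at h1
  have h2 := setIntegral_mono_set hint
    (Eventually.of_forall fun y => add_nonneg (sq_nonneg (n y)) (sq_nonneg (deriv n y)))
    hsub.eventuallyLE
  linarith

/-- The second derivative cannot be positive at a local maximum. -/
lemma IsLocalMax.deriv_deriv_nonpos {f : ℝ → ℝ} {x : ℝ} (h : IsLocalMax f x)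
    (hc : ContinuousAt f x) : deriv (deriv f) x ≤ 0 := by
  by_contra! hpos
  have hmin := isLocalMin_of_deriv_deriv_pos hpos h.deriv_eq_zero hc
  have hconst : f =ᶠ[nhds x] fun _ => f x := by
    filter_upwards [h, hmin] with y h1 h2 using le_antisymm h1 h2
  have : deriv (deriv f) x = 0 := by
    rw [hconst.deriv.deriv_eq]
    simp
  exact hpos.ne' this

/-- Weak maximum principle on the half-line: a function vanishing at `0` and at infinity is
bounded above by `r` if its second derivative is positive wherever it exceeds `r`. -/
lemma le_of_deriv_deriv_pos_of_tendsto_zero {f : ℝ → ℝ} (hf : Continuous f) {r : ℝ} (hr : 0 < r)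
    (h0 : f 0 = 0) (hlim : Tendsto f atTop (nhds 0))
    (hpos : ∀ x > 0, r < f x → 0 < deriv (deriv f) x) : ∀ x ≥ 0, f x ≤ r := by
  intro x hx
  by_contra! hlt
  obtain ⟨R, hR⟩ := eventually_atTop.1 (hlim.eventually (gt_mem_nhds hr))
  obtain ⟨z, hz, hmax⟩ := (isCompact_Icc (a := (0 : ℝ)) (b := max R x)).exists_isMaxOn
    ⟨x, hx, le_max_right _ _⟩ hf.continuousOn
  have hfz : r < f z := hlt.trans_le (hmax ⟨hx, le_max_right _ _⟩)
  have hz0 : 0 < z := lt_of_le_of_ne hz.1 fun h => by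
    rw [← h, h0] at hfz
    linarith
  have hlocal : IsLocalMax f z := by
    filter_upwards [lt_mem_nhds hz0] with y hy
    rcases le_total y (max R x) with hyR | hyR
    · exact hmax ⟨hy.le, hyR⟩
    · exact ((hR y ((le_max_left _ _).trans hyR)).trans hfz).le
  exact absurd (hpos z hz0 hfz) (hlocal.deriv_deriv_nonpos hf.continuousAt).not_gt

/-- Weighted energy estimate for functions whose second derivative is a coercive zeroth-order
term plus a source. -/
lemma lintegral_exp_mul_sq_add_deriv_sq_le {β : ℝ} (hβ0 : 0 < β) (hβ1 : β < 1) {n φ : ℝ → ℝ}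
    (hn : Continuous n) (hφ : ContDiff ℝ 2 φ) (hφ0 : φ 0 = 0)
    (hnint : ∫⁻ x in Ioi (0 : ℝ), ENNReal.ofReal (exp (β * x) * n x ^ 2) < ⊤)
    (hφint : ∫⁻ x in Ioi (0 : ℝ), ENNReal.ofReal
      (exp (β * x) * (φ x ^ 2 + deriv φ x ^ 2 + deriv (deriv φ) x ^ 2)) < ⊤)
    (hcoer : ∀ x > 0, 3 / 4 * φ x ^ 2 + φ x * n x ≤ φ x * deriv (deriv φ) x) :
    ∫⁻ x in Ioi (0 : ℝ), ENNReal.ofReal (exp (β * x) * (φ x ^ 2 + deriv φ x ^ 2)) ≤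
      16 * ∫⁻ x in Ioi (0 : ℝ), ENNReal.ofReal (exp (β * x) * n x ^ 2) := by
  have hφ' : ContDiff ℝ 1 (deriv φ) := ContDiff.deriv' (by rwa [one_add_one_eq_two])
  have c0 := hφ.continuous
  have c1 := hφ'.continuous
  have c2 : Continuous (deriv (deriv φ)) := hφ'.continuous_deriv le_rfl
  set w : ℝ → ℝ := fun x => exp (β * x)
  have hw : ∀ x, 0 < w x := fun x => exp_pos _
  have cw : Continuous w := by fun_prop
  let G : ℝ → ℝ := fun x => w x * (φ x * deriv φ x)
  let G' : ℝ → ℝ := fun x =>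
    w x * (β * (φ x * deriv φ x) + deriv φ x ^ 2 + φ x * deriv (deriv φ) x)
  have hG : ∀ x, HasDerivAt G (G' x) x := fun x => by
    have hw' : HasDerivAt w (w x * β) x := by
      simpa using ((hasDerivAt_id x).const_mul β).exp
    have h := hw'.mul (((hφ.differentiable (by norm_num)) x).hasDerivAt.mul
      (hφ'.differentiable one_ne_zero x).hasDerivAt)
    refine h.congr_deriv ?_
    simp only [G', Pi.mul_apply]
    ring
  have hEint : IntegrableOn (fun x => w x * (φ x ^ 2 + deriv φ x ^ 2 + deriv (deriv φ) x ^ 2))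
      (Ioi 0) :=
    integrableOn_Ioi_of_abs_le_of_lintegral_lt_top (by fun_prop) (by fun_prop)
      (fun x _ => (abs_of_nonneg (by have := hw x; positivity)).le) hφint
  have hGi : IntegrableOn G (Ioi 0) :=
    integrableOn_Ioi_of_abs_le_of_lintegral_lt_top (by fun_prop) (by fun_prop) (fun x _ => by
      rw [abs_mul, abs_of_pos (hw x)]
      refine mul_le_mul_of_nonneg_left ?_ (hw x).le
      rw [abs_le]
      constructor <;> nlinarith [sq_nonneg (φ x + deriv φ x), sq_nonneg (φ x - deriv φ x),
        sq_nonneg (deriv (deriv φ) x), sq_nonneg (φ x), sq_nonneg (deriv φ x)]) hφint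
  have hG'i : IntegrableOn G' (Ioi 0) := by
    refine Integrable.mono' (hEint.const_mul 2) (by fun_prop) (Eventually.of_forall fun x => ?_)
    rw [Real.norm_eq_abs, abs_mul, abs_of_pos (hw x), mul_left_comm 2]
    refine mul_le_mul_of_nonneg_left ?_ (hw x).le
    have hb : |β * (φ x * deriv φ x)| ≤ (φ x ^ 2 + deriv φ x ^ 2) / 2 := by
      rw [abs_mul, abs_of_pos hβ0]
      have : |φ x * deriv φ x| ≤ (φ x ^ 2 + deriv φ x ^ 2) / 2 := by
        rw [abs_le]
        constructor <;> nlinarith [sq_nonneg (φ x + deriv φ x), sq_nonneg (φ x - deriv φ x)]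
      nlinarith [abs_nonneg (φ x * deriv φ x)]
    rw [abs_le] at hb ⊢
    constructor <;> nlinarith [hb.1, hb.2, sq_nonneg (φ x + deriv (deriv φ) x),
      sq_nonneg (φ x - deriv (deriv φ) x), sq_nonneg (deriv (deriv φ) x), sq_nonneg (φ x),
      sq_nonneg (deriv φ x)]
  have hlim := tendsto_zero_of_hasDerivAt_of_integrableOn_Ioi (fun y _ => hG y) hG'i hGi
  have hFTC : ∫ x in Ioi (0 : ℝ), G' x = 0 := by
    rw [integral_Ioi_of_hasDerivAt_of_tendsto (hG 0).continuousAt.continuousWithinAt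
      (fun y _ => hG y) hG'i hlim]
    simp [G, hφ0]
  have hni : IntegrableOn (fun x => w x * n x ^ 2) (Ioi 0) :=
    integrableOn_Ioi_of_abs_le_of_lintegral_lt_top (by fun_prop) (by fun_prop)
      (fun x _ => (abs_of_nonneg (by have := hw x; positivity)).le) hnint
  have hLi : IntegrableOn (fun x => w x * (φ x ^ 2 + deriv φ x ^ 2)) (Ioi 0) :=
    integrableOn_Ioi_of_abs_le_of_lintegral_lt_top (by fun_prop) (by fun_prop) (fun x _ => by
      rw [abs_of_nonneg (by have := hw x; positivity)]
      exact mul_le_mul_of_nonneg_left (by linarith [sq_nonneg (deriv (deriv φ) x)]) (hw x).le)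
      hφint
  have hmain : ∫ x in Ioi (0 : ℝ), w x * (φ x ^ 2 + deriv φ x ^ 2) ≤
      ∫ x in Ioi (0 : ℝ), (8 * G' x + 16 * (w x * n x ^ 2)) := by
    refine setIntegral_mono_on hLi ((hG'i.const_mul 8).add (hni.const_mul 16))
      measurableSet_Ioi fun x hx => ?_
    have hpt : φ x ^ 2 + deriv φ x ^ 2 ≤ 8 * (β * (φ x * deriv φ x) + deriv φ x ^ 2
        + φ x * deriv (deriv φ) x) + 16 * n x ^ 2 := by
      have hb : -((φ x ^ 2 + deriv φ x ^ 2) / 2) ≤ β * (φ x * deriv φ x) := by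
        nlinarith [mul_nonneg hβ0.le (sq_nonneg (φ x + deriv φ x)),
          mul_nonneg (sub_nonneg.2 hβ1.le) (add_nonneg (sq_nonneg (φ x)) (sq_nonneg (deriv φ x)))]
      nlinarith [hcoer x hx, sq_nonneg (φ x + 4 * n x), sq_nonneg (deriv φ x)]
    have := mul_le_mul_of_nonneg_left hpt (hw x).le
    simp only [G']
    linarith
  rw [integral_add (hG'i.const_mul 8) (hni.const_mul 16), integral_const_mul, integral_const_mul,
    hFTC, mul_zero, zero_add] at hmain
  rw [← ofReal_integral_eq_lintegral_ofReal hLi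
      (Eventually.of_forall fun x => by have := hw x; positivity),
    ← ofReal_integral_eq_lintegral_ofReal hni
      (Eventually.of_forall fun x => by have := hw x; positivity),
    show (16 : ENNReal) = ENNReal.ofReal 16 by norm_num, ← ENNReal.ofReal_mul (by norm_num)]
  exact ENNReal.ofReal_le_ofReal hmain

/-- exponentially weighted elliptic estimate
`‖e^{βx/2}∂_x^k φ‖_{H²} ≤ C Σ_{i≤k} ‖e^{βx/2}∂_x^i n‖_{L²}` (k = 0, 1), with `δ₀, C`
independent of `β ∈ (0,1)`. -/
theorem elliptic_weighted_estimate
    (ne : ℝ → ℝ) (hne : ContDiff ℝ 2 ne) (hne0 : ne 0 = 1)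
    (hne1 : deriv ne 0 = -1) (hne' : ∀ s, deriv ne s < 0) :
    ∃ δ₀ > 0, ∃ C > 0, ∀ β : ℝ, 0 < β → β < 1 →
      ∀ (Φb : ℝ) (Φs n φ : ℝ → ℝ),
      0 < Φb → ContDiff ℝ 1 Φs →
      (∀ x ≥ (0:ℝ), 0 ≤ Φs x ∧ Φs x ≤ Φb ∧ |deriv Φs x| ≤ Φb) →
      ContDiff ℝ 1 n →
      (∫⁻ x in Set.Ioi (0:ℝ), ENNReal.ofReal
        (Real.exp (β*x) * ((n x)^2 + (deriv n x)^2))) < ⊤ →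
      ContDiff ℝ 3 φ →
      (∀ x > (0:ℝ), deriv (deriv φ) x = n x - (ne (Φs x + φ x) - ne (Φs x))) →
      φ 0 = 0 → Tendsto φ atTop (nhds 0) →
      (∫⁻ x in Set.Ioi (0:ℝ), ENNReal.ofReal (Real.exp (β*x) *
        ((φ x)^2 + (deriv φ x)^2 + (deriv^[2] φ x)^2 + (deriv^[3] φ x)^2))) < ⊤ →
      Φb + Real.sqrt (∫ x in Set.Ioi (0:ℝ), ((n x)^2 + (deriv n x)^2)) ≤ δ₀ →
      ∀ k : ℕ, k ≤ 1 →
        (∫⁻ x in Set.Ioi (0:ℝ), ENNReal.ofReal (Real.exp (β*x) *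
            ((deriv^[k] φ x)^2 + (deriv^[k+1] φ x)^2 + (deriv^[k+2] φ x)^2)))
          ≤ ENNReal.ofReal C *
            ∫⁻ x in Set.Ioi (0:ℝ), ENNReal.ofReal (Real.exp (β*x) *
              (∑ i ∈ Finset.range (k+1), (deriv^[i] n x)^2)) := by
  obtain ⟨r, hr, hr1, M, hM, hloc⟩ := increment_bounds_of_deriv_eq_neg_one ne hne hne1
  have hned : Differentiable ℝ ne := hne.differentiable (by norm_num)
  have hanti : StrictAnti ne := strictAnti_of_deriv_neg hne'
  refine ⟨r / 2, by positivity, 17 * (10 + 3 * M ^ 2), by positivity, ?_⟩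
  intro β hβ0 hβ1 Φb Φs n φ hΦb hΦs hΦsb hn hnint hφ heq hφ0 hφlim hφint hsmall k hk
  have hφ' : ContDiff ℝ 2 (deriv φ) := ContDiff.deriv' (by rwa [two_add_one_eq_three])
  have hφ'' : ContDiff ℝ 1 (deriv (deriv φ)) := ContDiff.deriv' (by rwa [one_add_one_eq_two])
  have cn := hn.continuous
  have cn' : Continuous (deriv n) := hn.continuous_deriv le_rfl
  have hsqrt := Real.sqrt_nonneg (∫ x in Ioi (0 : ℝ), (n x ^ 2 + deriv n x ^ 2))
  have hΦbr : Φb ≤ r / 2 := by linarith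
  have hΦsr : ∀ x ≥ 0, |Φs x| ≤ r := fun x hx => by
    obtain ⟨h1, h2, -⟩ := hΦsb x hx
    rw [abs_of_nonneg h1]
    linarith
  have hn1int : IntegrableOn (fun x => n x ^ 2 + deriv n x ^ 2) (Ioi 0) :=
    integrableOn_Ioi_of_abs_le_of_lintegral_lt_top (by fun_prop) (by fun_prop) (fun x hx => by
      rw [abs_of_nonneg (by positivity)]
      have : 1 ≤ exp (β * x) := Real.one_le_exp (mul_nonneg hβ0.le (le_of_lt hx))
      exact le_mul_of_one_le_left (by positivity) this) hnint
  have hnsup : ∀ x ≥ 0, |n x| ≤ r / 2 := fun x hx =>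
    (Real.abs_le_sqrt (sq_le_integral_Ioi_sq_add_deriv_sq hn hn1int hx)).trans (by linarith)
  have hφup : ∀ x ≥ 0, φ x ≤ r := by
    refine le_of_deriv_deriv_pos_of_tendsto_zero hφ.continuous hr hφ0 hφlim fun x hx hlt => ?_
    have h1 := abs_le.1 (hloc (Φs x) r (hΦsr x hx.le) (abs_of_pos hr).le).1
    have h2 := hanti (show Φs x + r < Φs x + φ x by linarith)
    have h3 := abs_le.1 (hnsup x hx.le)
    rw [abs_of_pos hr] at h1
    rw [heq x hx]
    linarith [h1.2, h3.1]
  have hφlow : ∀ x ≥ 0, -φ x ≤ r := by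
    refine le_of_deriv_deriv_pos_of_tendsto_zero (f := fun x => -φ x) hφ.continuous.neg hr
      (by simp [hφ0]) (by simpa using hφlim.neg) fun x hx hlt => ?_
    have h1 := abs_le.1 (hloc (Φs x) (-r) (hΦsr x hx.le) (by rw [abs_neg, abs_of_pos hr])).1
    have h2 := hanti (show Φs x + φ x < Φs x + -r by linarith)
    have h3 := abs_le.1 (hnsup x hx.le)
    rw [abs_neg, abs_of_pos hr] at h1
    rw [show deriv (fun x => -φ x) = fun x => -deriv φ x from funext fun y => deriv.fun_neg,
      deriv.fun_neg, heq x hx]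
    linarith [h1.1, h3.2]
  have hφr : ∀ x ≥ 0, |φ x| ≤ r := fun x hx => abs_le.2 ⟨by linarith [hφlow x hx], hφup x hx⟩
  have hE : ∫⁻ x in Ioi (0 : ℝ), ENNReal.ofReal (exp (β * x) * (φ x ^ 2 + deriv φ x ^ 2)) ≤
      16 * ∫⁻ x in Ioi (0 : ℝ), ENNReal.ofReal (exp (β * x) * n x ^ 2) := by
    refine lintegral_exp_mul_sq_add_deriv_sq_le hβ0 hβ1 cn (hφ.of_le (by norm_num)) hφ0
      (lt_of_le_of_lt (lintegral_mono fun x => ENNReal.ofReal_le_ofReal ?_) hnint)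
      (lt_of_le_of_lt (lintegral_mono fun x => ENNReal.ofReal_le_ofReal ?_) hφint) fun x hx => ?_
    · exact mul_le_mul_of_nonneg_left (by linarith [sq_nonneg (deriv n x)]) (exp_pos _).le
    · exact mul_le_mul_of_nonneg_left (by simp; positivity) (exp_pos _).le
    · have h := (hloc (Φs x) (φ x) (hΦsr x hx.le) (hφr x hx.le)).1
      rw [heq x hx]
      have h2 : φ x * (ne (Φs x + φ x) - ne (Φs x) + φ x) ≤ φ x ^ 2 / 4 := by
        calc _ ≤ |φ x| * |ne (Φs x + φ x) - ne (Φs x) + φ x| := by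
              rw [← abs_mul]; exact le_abs_self _
          _ ≤ |φ x| * (|φ x| / 4) := mul_le_mul_of_nonneg_left h (abs_nonneg _)
          _ = φ x ^ 2 / 4 := by rw [← sq_abs (φ x)]; ring
      nlinarith
  have hsecond : ∀ x > 0, deriv (deriv φ) x ^ 2 ≤ 2 * n x ^ 2 + 4 * φ x ^ 2 := fun x hx => by
    have h := (hloc (Φs x) (φ x) (hΦsr x hx.le) (hφr x hx.le)).1
    have h2 : (ne (Φs x + φ x) - ne (Φs x)) ^ 2 ≤ 2 * φ x ^ 2 := by
      have h3 : |ne (Φs x + φ x) - ne (Φs x)| ≤ 5 / 4 * |φ x| := by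
        calc _ = |(ne (Φs x + φ x) - ne (Φs x) + φ x) - φ x| := by rw [add_sub_cancel_right]
          _ ≤ |ne (Φs x + φ x) - ne (Φs x) + φ x| + |φ x| := abs_sub _ _
          _ ≤ 5 / 4 * |φ x| := by linarith
      rw [← sq_abs, ← sq_abs (φ x)]
      nlinarith [abs_nonneg (ne (Φs x + φ x) - ne (Φs x)), abs_nonneg (φ x)]
    rw [heq x hx]
    nlinarith [sq_nonneg (n x + (ne (Φs x + φ x) - ne (Φs x)))]
  have hthird : ∀ x > 0, deriv (deriv (deriv φ)) x ^ 2 ≤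
      3 * deriv n x ^ 2 + 5 * deriv φ x ^ 2 + 3 * M ^ 2 * φ x ^ 2 := fun x hx => by
    obtain ⟨-, h2, h3⟩ := hloc (Φs x) (φ x) (hΦsr x hx.le) (hφr x hx.le)
    obtain ⟨-, -, h4⟩ := hΦsb x hx.le
    have hloceq : deriv (deriv φ) =ᶠ[nhds x] fun y => n y - (ne (Φs y + φ y) - ne (Φs y)) := by
      filter_upwards [lt_mem_nhds hx] with y hy using heq y hy
    have dΦ := (hΦs.differentiable one_ne_zero x).hasDerivAt
    have dφ := (hφ.differentiable (by norm_num) x).hasDerivAt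
    have dn := (hn.differentiable one_ne_zero x).hasDerivAt
    have hder := dn.sub (((hned (Φs x + φ x)).hasDerivAt.comp x (dΦ.add dφ)).sub
      ((hned (Φs x)).hasDerivAt.comp x dΦ))
    have hval : deriv (deriv (deriv φ)) x = deriv n x - deriv ne (Φs x + φ x) * deriv φ x
        - (deriv ne (Φs x + φ x) - deriv ne (Φs x)) * deriv Φs x := by
      rw [hloceq.deriv_eq]
      refine (HasDerivAt.deriv hder).trans ?_
      ring
    have hp : (deriv ne (Φs x + φ x) * deriv φ x) ^ 2 ≤ 5 / 3 * deriv φ x ^ 2 := by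
      rw [mul_pow]
      refine mul_le_mul_of_nonneg_right ?_ (sq_nonneg _)
      rw [← sq_abs]
      nlinarith [abs_nonneg (deriv ne (Φs x + φ x))]
    have hq : ((deriv ne (Φs x + φ x) - deriv ne (Φs x)) * deriv Φs x) ^ 2 ≤ M ^ 2 * φ x ^ 2 := by
      rw [← sq_abs, ← sq_abs (φ x), ← mul_pow, abs_mul]
      refine pow_le_pow_left₀ (by positivity) ?_ 2
      calc _ ≤ M * |φ x| * 1 := mul_le_mul h2 (by linarith) (abs_nonneg _) (by positivity)
        _ = M * |φ x| := mul_one _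
    rw [hval]
    set p := deriv ne (Φs x + φ x) * deriv φ x
    set q := (deriv ne (Φs x + φ x) - deriv ne (Φs x)) * deriv Φs x
    nlinarith [sq_nonneg (deriv n x + p), sq_nonneg (deriv n x + q), sq_nonneg (p - q)]
  have hpt : ∀ x > 0, (deriv^[k] φ x) ^ 2 + (deriv^[k+1] φ x) ^ 2 + (deriv^[k+2] φ x) ^ 2 ≤
      (10 + 3 * M ^ 2) * (φ x ^ 2 + deriv φ x ^ 2
        + ∑ i ∈ Finset.range (k + 1), (deriv^[i] n x) ^ 2) := fun x hx => by
    have h2 := hsecond x hx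
    have h3 := hthird x hx
    have m1 : 0 ≤ M ^ 2 * φ x ^ 2 := by positivity
    have m2 : 0 ≤ M ^ 2 * deriv φ x ^ 2 := by positivity
    have m3 : 0 ≤ M ^ 2 * n x ^ 2 := by positivity
    have m4 : 0 ≤ M ^ 2 * deriv n x ^ 2 := by positivity
    have := sq_nonneg (φ x)
    have := sq_nonneg (deriv φ x)
    have := sq_nonneg (n x)
    have := sq_nonneg (deriv n x)
    interval_cases k
    · simp
      linarith
    · simp [Finset.sum_range_succ]
      linarith
  have hsum : ∀ x, n x ^ 2 ≤ ∑ i ∈ Finset.range (k + 1), (deriv^[i] n x) ^ 2 := fun x =>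
    Finset.single_le_sum (f := fun i => (deriv^[i] n x) ^ 2) (fun i _ => sq_nonneg _)
      (Finset.mem_range.2 k.succ_pos)
  set L := ∫⁻ x in Ioi (0 : ℝ), ENNReal.ofReal (exp (β * x) *
    (∑ i ∈ Finset.range (k + 1), (deriv^[i] n x) ^ 2)) with hL
  have hnL : ∫⁻ x in Ioi (0 : ℝ), ENNReal.ofReal (exp (β * x) * n x ^ 2) ≤ L :=
    lintegral_mono fun x =>
      ENNReal.ofReal_le_ofReal (mul_le_mul_of_nonneg_left (hsum x) (exp_pos _).le)
  have hK : 0 ≤ 10 + 3 * M ^ 2 := by positivity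
  have cφ := hφ.continuous
  have cφ' := hφ'.continuous
  calc _ ≤ ∫⁻ x in Ioi (0 : ℝ), ENNReal.ofReal (10 + 3 * M ^ 2) *
        (ENNReal.ofReal (exp (β * x) * (φ x ^ 2 + deriv φ x ^ 2)) + ENNReal.ofReal (exp (β * x) *
          (∑ i ∈ Finset.range (k + 1), (deriv^[i] n x) ^ 2))) := by
        refine setLIntegral_mono' measurableSet_Ioi fun x hx => ?_
        rw [← ENNReal.ofReal_add (by positivity) (by positivity), ← ENNReal.ofReal_mul hK]
        refine ENNReal.ofReal_le_ofReal ?_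
        rw [← mul_add, mul_left_comm]
        exact mul_le_mul_of_nonneg_left (hpt x hx) (exp_pos _).le
    _ = ENNReal.ofReal (10 + 3 * M ^ 2) *
        ((∫⁻ x in Ioi (0 : ℝ), ENNReal.ofReal (exp (β * x) * (φ x ^ 2 + deriv φ x ^ 2))) + L) := by
        rw [lintegral_const_mul' _ _ ENNReal.ofReal_ne_top, lintegral_add_left (by fun_prop)]
    _ ≤ ENNReal.ofReal (10 + 3 * M ^ 2) * (16 * L + L) := by
        gcongr
        exact hE.trans (by gcongr)
    _ = ENNReal.ofReal (17 * (10 + 3 * M ^ 2)) * L := by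
        rw [ENNReal.ofReal_mul (by norm_num), show ENNReal.ofReal 17 = 17 by norm_num]
        ring
end

section
/- Let r > 0, ε ∈ (0, r/2), γ > 0, T > 0, u∞ ∈ ℝ and θ∞ > 0. Let E_s : [0,∞) → ℝ be continuous with E_s(x) ≤ 0 for all x, and let E_p : [0,T] × [0,∞) → ℝ be continuous with |E_s(x) + E_p(t,x)| ≤ 1 and |E_p(t,x)| ≤ (ε γ / 2) e^{−γ t / 2} for all (t,x). Let g : [0,T] × [0,∞) × ℝ³ → ℝ be continuous with g(t,x,ξ) = 0 whenever ξ₁ ≥ −r. Suppose f : [0,T] × [0,∞) × ℝ³ → ℝ is C¹, satisfies the transport equation ∂_t f + ξ₁ ∂_x f + (E_s + E_p) ∂_{ξ₁} f + g = ((ξ₁ − u∞)/(2θ∞)) (E_s + E_p) f on (0,T) × (0,∞) × ℝ³, satisfies the boundary condition f(t,0,ξ) = 0 for all t and all ξ with ξ₁ > 0, satisfies f(0,x,ξ) = 0 whenever ξ₁ ≥ −(r − ε), and satisfies ∫₀^T ∫₀^∞ ∫_{ℝ³} (1 + |ξ₁|²)( |f|² + |∇_{t,x,ξ} f|² ) dξ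 dx dt < ∞ together with sup_{t∈[0,T]} ∫₀^∞ ∫_{ℝ³} (1 + |ξ₁|) |f(t,x,ξ)|² dξ dx < ∞. Then f(t,x,ξ) = 0 whenever ξ₁ ≥ −(r − 2ε). -/
open MeasureTheory Real Set Filter

/-- Maximum principle for first-order equations: if `F` grows at most linearly in `|F|` along the
vector field `d`, and moving backwards along `d` does not leave the compact set `K` at points where
`F ≠ 0`, then `F` vanishes on `K`. -/
lemma eq_zero_of_transport_of_backward_mem {P : Type*} [NormedAddCommGroup P] [NormedSpace ℝ P]
    {K : Set P} (hK : IsCompact K) {F : P → ℝ} (hF : Differentiable ℝ F) (τ : P →L[ℝ] ℝ)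
    (d : P → P) (C : ℝ) (hτ : ∀ p ∈ K, τ (d p) = 1)
    (hC : ∀ p ∈ K, |fderiv ℝ F p (d p)| ≤ C * |F p|)
    (hd : ∀ p ∈ K, F p ≠ 0 → ∀ᶠ h in nhdsWithin (0 : ℝ) (Ioi 0), p - h • d p ∈ K) :
    ∀ p ∈ K, F p = 0 := by
  intro q hq
  by_contra hFq
  have hcont : Continuous fun p => F p ^ 2 * exp (-(2 * C + 1) * τ p) := by
    have := hF.continuous
    fun_prop
  obtain ⟨p, hp, hmax⟩ := hK.exists_isMaxOn ⟨q, hq⟩ hcont.continuousOn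
  have hFp : F p ≠ 0 := by
    intro h0
    have h1 := hmax hq
    simp only [mem_ofPred_eq, h0] at h1
    have h2 : 0 < F q ^ 2 * exp (-(2 * C + 1) * τ q) := by positivity
    linarith
  have hline : HasDerivAt (fun h : ℝ => p - h • d p) (-d p) 0 := by
    simpa using ((hasDerivAt_id (0 : ℝ)).smul_const (d p)).const_sub p
  have hFl : HasDerivAt (fun h : ℝ => F (p - h • d p)) (fderiv ℝ F p (-d p)) 0 := by
    have h1 : HasFDerivAt F (fderiv ℝ F p) (p - (0 : ℝ) • d p) := by
      simpa using (hF p).hasFDerivAt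
    exact h1.comp_hasDerivAt 0 hline
  have hτl : HasDerivAt (fun h : ℝ => τ (p - h • d p)) (τ (-d p)) 0 :=
    τ.hasFDerivAt.comp_hasDerivAt 0 hline
  have hw := (hFl.pow 2).mul ((hτl.const_mul (-(2 * C + 1))).exp)
  have hslope := hw.tendsto_slope_zero_right
  have hle := le_of_tendsto hslope (b := 0) (by
    filter_upwards [hd p hp hFp, self_mem_nhdsWithin] with h hh hpos
    have h1 := hmax hh
    simp only [mem_ofPred_eq] at h1
    have h2 : (0 : ℝ) ≤ h⁻¹ := inv_nonneg.2 (le_of_lt hpos)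
    simp only [Pi.mul_apply, Pi.pow_apply, zero_add, zero_smul, sub_zero, smul_eq_mul]
    exact mul_nonpos_of_nonneg_of_nonpos h2 (by linarith))
  have hFF : F p * fderiv ℝ F p (d p) ≤ C * F p ^ 2 := by
    calc F p * fderiv ℝ F p (d p) ≤ |F p| * |fderiv ℝ F p (d p)| := by
          rw [← abs_mul]; exact le_abs_self _
      _ ≤ |F p| * (C * |F p|) := by gcongr; exact hC p hp
      _ = C * F p ^ 2 := by rw [← sq_abs (F p)]; ring
  have hpos : 0 < F p ^ 2 := by positivity
  simp only [Pi.pow_apply, zero_smul, sub_zero, map_neg, hτ p hp] at hle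
  have he := exp_pos (-(2 * C + 1) * τ p)
  have : 0 < exp (-(2 * C + 1) * τ p) *
      ((2 * C + 1) * F p ^ 2 - 2 * (F p * fderiv ℝ F p (d p))) :=
    mul_pos he (by linarith)
  norm_num at hle this
  nlinarith

/-- The transport derivative of a differentiable function in terms of partial derivatives. -/
lemma fderiv_transport_eq_deriv {f : ℝ → ℝ → ℝ × ℝ × ℝ → ℝ}
    (hf : Differentiable ℝ (fun p : ℝ × ℝ × (ℝ × ℝ × ℝ) => f p.1 p.2.1 p.2.2))
    (t x : ℝ) (ξ : ℝ × ℝ × ℝ) (a b : ℝ) :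
    fderiv ℝ (fun p : ℝ × ℝ × (ℝ × ℝ × ℝ) => f p.1 p.2.1 p.2.2) (t, x, ξ) (1, a, (b, 0)) =
      deriv (fun s => f s x ξ) t + a * deriv (fun y => f t y ξ) x
        + b * deriv (fun v => f t x (v, ξ.2)) ξ.1 := by
  have hF := (hf (t, x, ξ)).hasFDerivAt
  have h1 : HasDerivAt (fun s : ℝ => (s, x, ξ)) (1, 0, 0) t :=
    (hasDerivAt_id t).prodMk (hasDerivAt_const t (x, ξ))
  have h2 : HasDerivAt (fun y : ℝ => (t, y, ξ)) (0, 1, 0) x :=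
    (hasDerivAt_const x t).prodMk ((hasDerivAt_id x).prodMk (hasDerivAt_const x ξ))
  have h3 : HasDerivAt (fun v : ℝ => (t, x, (v, ξ.2))) (0, 0, (1, 0)) ξ.1 :=
    (hasDerivAt_const _ t).prodMk
      ((hasDerivAt_const _ x).prodMk ((hasDerivAt_id ξ.1).prodMk (hasDerivAt_const _ ξ.2)))
  have e1 := (hF.comp_hasDerivAt t h1).deriv
  have e2 := (hF.comp_hasDerivAt x h2).deriv
  have e3 := (HasFDerivAt.comp_hasDerivAt ξ.1 (by exact hF) h3).deriv
  simp only [Function.comp_def] at e1 e2 e3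
  rw [e1, e2, e3, ← smul_eq_mul, ← smul_eq_mul, ← map_smul, ← map_smul, ← map_add, ← map_add]
  simp

/-- Two continuous functions agreeing on `(0,T) × (0,∞)` agree on `[0,T] × [0,∞)`. -/
lemma eq_on_Icc_Ici_of_eq_on_Ioo_Ioi {T : ℝ} (hT : 0 < T) {A B : ℝ × ℝ → ℝ}
    (hA : Continuous A) (hB : Continuous B)
    (h : ∀ t ∈ Ioo 0 T, ∀ x > (0 : ℝ), A (t, x) = B (t, x)) :
    ∀ t ∈ Icc 0 T, ∀ x ≥ (0 : ℝ), A (t, x) = B (t, x) := by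
  intro t ht x hx
  have hEq : EqOn A B (Ioo 0 T ×ˢ Ioi 0) := fun p hp => h p.1 hp.1 p.2 hp.2
  refine hEq.closure hA hB ?_
  rw [closure_prod_eq, closure_Ioo hT.ne, closure_Ioi]
  exact ⟨ht, hx⟩

/-- support propagation for the transport equation
`∂_t f + ξ₁∂_x f + (E_s+E_p)∂_{ξ₁}f + g = ((ξ₁−u∞)/(2θ∞))(E_s+E_p) f` on the half-line
with absorbing boundary condition: if the initial data vanish for `ξ₁ ≥ −(r−ε)` and the
source `g` vanishes for `ξ₁ ≥ −r`, then the solution vanishes for `ξ₁ ≥ −(r−2ε)`. -/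
theorem support_propagation_stability
    (r ε γ T u θ : ℝ) (hr : 0 < r) (hε : 0 < ε) (hε2 : ε < r/2)
    (hγ : 0 < γ) (hT : 0 < T) (hθ : 0 < θ)
    (Es : ℝ → ℝ) (hEsc : Continuous Es) (hEs0 : ∀ x, Es x ≤ 0)
    (Ep : ℝ → ℝ → ℝ) (hEpc : Continuous (fun p : ℝ × ℝ => Ep p.1 p.2))
    (hE1 : ∀ t ∈ Set.Icc 0 T, ∀ x ≥ (0:ℝ), |Es x + Ep t x| ≤ 1)
    (hE2 : ∀ t ∈ Set.Icc 0 T, ∀ x ≥ (0:ℝ), |Ep t x| ≤ ε * γ / 2 * Real.exp (-γ * t / 2))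
    (g : ℝ → ℝ → ℝ × ℝ × ℝ → ℝ)
    (hgc : Continuous (fun p : ℝ × ℝ × (ℝ × ℝ × ℝ) => g p.1 p.2.1 p.2.2))
    (hg0 : ∀ t x, ∀ ξ : ℝ × ℝ × ℝ, -r ≤ ξ.1 → g t x ξ = 0)
    (f : ℝ → ℝ → ℝ × ℝ × ℝ → ℝ)
    (hf : ContDiff ℝ 1 (fun p : ℝ × ℝ × (ℝ × ℝ × ℝ) => f p.1 p.2.1 p.2.2))
    (heq : ∀ t ∈ Set.Ioo 0 T, ∀ x > (0:ℝ), ∀ ξ : ℝ × ℝ × ℝ,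
      deriv (fun s => f s x ξ) t + ξ.1 * deriv (fun y => f t y ξ) x
        + (Es x + Ep t x) * deriv (fun v => f t x (v, ξ.2)) ξ.1 + g t x ξ
        = ((ξ.1 - u) / (2*θ)) * (Es x + Ep t x) * f t x ξ)
    (hbc : ∀ t ∈ Set.Icc 0 T, ∀ ξ : ℝ × ℝ × ℝ, 0 < ξ.1 → f t 0 ξ = 0)
    (hic : ∀ x ≥ (0:ℝ), ∀ ξ : ℝ × ℝ × ℝ, -(r - ε) ≤ ξ.1 → f 0 x ξ = 0)
    (hint : (∫⁻ t in Set.Ioc 0 T, ∫⁻ x in Set.Ioi 0, ∫⁻ ξ : ℝ × ℝ × ℝ,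
        ENNReal.ofReal ((1 + ξ.1^2) * ((f t x ξ)^2 +
          ‖fderiv ℝ (fun p : ℝ × ℝ × (ℝ × ℝ × ℝ) => f p.1 p.2.1 p.2.2) (t, x, ξ)‖^2))) < ⊤)
    (hsup : ∃ B : ℝ, ∀ t ∈ Set.Icc 0 T,
      (∫⁻ x in Set.Ioi 0, ∫⁻ ξ : ℝ × ℝ × ℝ,
        ENNReal.ofReal ((1 + |ξ.1|) * (f t x ξ)^2)) ≤ ENNReal.ofReal B) :
    ∀ t ∈ Set.Icc 0 T, ∀ x ≥ (0:ℝ), ∀ ξ : ℝ × ℝ × ℝ, -(r - 2*ε) ≤ ξ.1 → f t x ξ = 0 := by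
  have hFd : Differentiable ℝ (fun p : ℝ × ℝ × (ℝ × ℝ × ℝ) => f p.1 p.2.1 p.2.2) :=
    hf.differentiable (by norm_num)
  have hFc := hf.continuous
  have hF'c := hf.continuous_fderiv (by norm_num)
  have htrans : ∀ t ∈ Icc 0 T, ∀ x ≥ (0 : ℝ), ∀ ξ : ℝ × ℝ × ℝ,
      fderiv ℝ (fun p : ℝ × ℝ × (ℝ × ℝ × ℝ) => f p.1 p.2.1 p.2.2) (t, x, ξ)
        (1, ξ.1, (Es x + Ep t x, 0)) + g t x ξ
        = ((ξ.1 - u) / (2*θ)) * (Es x + Ep t x) * f t x ξ := by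
    intro t ht x hx ξ
    have hι : Continuous fun q : ℝ × ℝ => (q.1, q.2, ξ) := by fun_prop
    have hE : Continuous fun q : ℝ × ℝ => Es q.2 + Ep q.1 q.2 :=
      (hEsc.comp continuous_snd).add hEpc
    refine eq_on_Icc_Ici_of_eq_on_Ioo_Ioi hT
      (A := fun q => fderiv ℝ (fun p : ℝ × ℝ × (ℝ × ℝ × ℝ) => f p.1 p.2.1 p.2.2) (q.1, q.2, ξ)
        (1, ξ.1, (Es q.2 + Ep q.1 q.2, 0)) + g q.1 q.2 ξ)
      (B := fun q => ((ξ.1 - u) / (2*θ)) * (Es q.2 + Ep q.1 q.2) * f q.1 q.2 ξ)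
      (((hF'c.comp hι).clm_apply (by fun_prop)).add (hgc.comp hι))
      ((continuous_const.mul hE).mul (hFc.comp hι)) ?_ t ht x hx
    intro t ht x hx
    simpa only [fderiv_transport_eq_deriv hFd] using heq t ht x hx ξ
  have hbc0 : ∀ t ∈ Icc 0 T, ∀ ξ : ℝ × ℝ × ℝ, 0 ≤ ξ.1 → f t 0 ξ = 0 := by
    intro t ht ξ hξ
    have hc : Continuous fun v : ℝ => f t 0 (v, ξ.2) :=
      hFc.comp (by fun_prop : Continuous fun v : ℝ => (t, (0 : ℝ), (v, ξ.2)))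
    have hEq : EqOn (fun v : ℝ => f t 0 (v, ξ.2)) (fun _ => 0) (Ioi 0) :=
      fun v hv => hbc t ht (v, ξ.2) hv
    exact hEq.closure hc continuous_const (by rw [closure_Ioi]; exact hξ)
  intro t₀ ht₀ x₀ hx₀ ξ₀ hξ₀
  set R : ℝ := |ξ₀.1| + T + r
  set K : Set (ℝ × ℝ × (ℝ × ℝ × ℝ)) := {p | 0 ≤ p.1 ∧ p.1 ≤ t₀ ∧ 0 ≤ p.2.1 ∧
    p.2.1 ≤ x₀ + R * (t₀ - p.1) ∧
    -(r - ε) + ε * (1 - exp (-γ * p.1 / 2)) ≤ p.2.2.1 ∧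
    p.2.2.1 ≤ |ξ₀.1| + (t₀ - p.1) ∧ p.2.2.2 = ξ₀.2} with hKdef
  have hbpos : ∀ s : ℝ, 0 ≤ s → 0 ≤ ε * (1 - exp (-γ * s / 2)) := by
    intro s hs
    have : exp (-γ * s / 2) ≤ 1 := exp_le_one_iff.2 (by nlinarith)
    exact mul_nonneg hε.le (by linarith)
  have hvR : ∀ p ∈ K, -(r - ε) ≤ p.2.2.1 ∧ |p.2.2.1| ≤ R := by
    rintro p ⟨h1, h2, h3, h4, h5, h6, h7⟩
    have := hbpos p.1 h1
    have := abs_nonneg ξ₀.1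
    have := ht₀.2
    exact ⟨by linarith, abs_le.2 ⟨by linarith, by linarith⟩⟩
  have hRnn : 0 ≤ R := by positivity
  have hKclosed : IsClosed K := by
    have hc : ∀ {a b : ℝ × ℝ × (ℝ × ℝ × ℝ) → ℝ}, Continuous a → Continuous b →
      IsClosed {p | a p ≤ b p} := fun ha hb => isClosed_le ha hb
    refine (hc ?_ ?_).inter ((hc ?_ ?_).inter ((hc ?_ ?_).inter ((hc ?_ ?_).inter
      ((hc ?_ ?_).inter ((hc ?_ ?_).inter (isClosed_eq ?_ ?_)))))) <;> fun_prop
  have hK : IsCompact K := by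
    refine IsCompact.of_isClosed_subset
      ((isCompact_Icc (a := 0) (b := T)).prod ((isCompact_Icc (a := 0) (b := x₀ + R * T)).prod
        ((isCompact_Icc (a := -R) (b := R)).prod (isCompact_singleton (x := ξ₀.2)))))
      hKclosed ?_
    rintro p hp
    have hv := abs_le.1 (hvR p hp).2
    obtain ⟨h1, h2, h3, h4, h5, h6, h7⟩ := hp
    refine ⟨⟨h1, h2.trans ht₀.2⟩, ⟨h3, h4.trans ?_⟩, hv, h7⟩
    have : t₀ - p.1 ≤ T := by linarith [ht₀.2]
    gcongr
  refine eq_zero_of_transport_of_backward_mem hK hFd (ContinuousLinearMap.fst ℝ ℝ _)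
    (fun p => (1, p.2.2.1, (Es p.2.1 + Ep p.1 p.2.1, 0))) ((R + |u|) / (2 * θ))
    (fun _ _ => rfl) ?_ ?_ (t₀, x₀, ξ₀) ?_
  · intro p hp
    obtain ⟨hv, hv'⟩ := hvR p hp
    obtain ⟨h1, h2, h3, h4, h5, h6, h7⟩ := hp
    have hpT : p.1 ∈ Icc 0 T := ⟨h1, h2.trans ht₀.2⟩
    have h := htrans p.1 hpT p.2.1 h3 p.2.2
    rw [hg0 p.1 p.2.1 p.2.2 (by linarith), add_zero] at h
    rw [h, abs_mul, abs_mul, abs_div, abs_of_pos (by positivity : 0 < 2 * θ)]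
    gcongr
    calc |p.2.2.1 - u| / (2 * θ) * |Es p.2.1 + Ep p.1 p.2.1|
        ≤ (R + |u|) / (2 * θ) * 1 := by
          gcongr
          · exact (abs_sub _ _).trans (by gcongr)
          · exact hE1 p.1 hpT p.2.1 h3
      _ = _ := mul_one _
  · intro p hp hFp
    obtain ⟨hv, hv'⟩ := hvR p hp
    obtain ⟨h1, h2, h3, h4, h5, h6, h7⟩ := hp
    have hpT : p.1 ∈ Icc 0 T := ⟨h1, h2.trans ht₀.2⟩
    have hs : 0 < p.1 := by
      refine h1.lt_of_ne fun h0 => hFp ?_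
      rw [← h0]
      exact hic p.2.1 h3 p.2.2 hv
    have hx : ∀ᶠ h in nhdsWithin (0 : ℝ) (Ioi 0), 0 ≤ p.2.1 - h * p.2.2.1 := by
      rcases h3.eq_or_lt with h0 | hpos
      · have hneg : p.2.2.1 < 0 := by
          by_contra! hnn
          refine hFp ?_
          rw [← h0]
          exact hbc0 p.1 hpT p.2.2 hnn
        filter_upwards [self_mem_nhdsWithin] with h (hh : 0 < h)
        nlinarith
      · have hc : Continuous fun h : ℝ => p.2.1 - h * p.2.2.1 := by fun_prop
        have := hc.tendsto 0
        simp only [zero_mul, sub_zero] at this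
        filter_upwards [(this.mono_left nhdsWithin_le_nhds).eventually_const_le hpos] with h hh
        exact hh
    filter_upwards [hx, Ioo_mem_nhdsGT hs] with h hxh ⟨hh0, hhs⟩
    have hE := abs_le.1 (hE1 p.1 hpT p.2.1 h3)
    have hv'' := abs_le.1 hv'
    have hEp := (abs_le.1 (hE2 p.1 hpT p.2.1 h3)).2
    have hexp : exp (-γ * p.1 / 2) * (γ * h / 2 + 1) ≤ exp (-γ * (p.1 - h) / 2) := by
      rw [show -γ * (p.1 - h) / 2 = -γ * p.1 / 2 + γ * h / 2 by ring, exp_add]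
      gcongr
      exact add_one_le_exp _
    simp only [hKdef, mem_ofPred_eq, Prod.fst_sub, Prod.snd_sub, Prod.smul_fst, Prod.smul_snd,
      smul_eq_mul, mul_one, smul_zero, sub_zero]
    refine ⟨by linarith, by linarith, hxh, by nlinarith, ?_, by nlinarith, h7⟩
    have hEle : h * (Es p.2.1 + Ep p.1 p.2.1) ≤ h * (ε * γ / 2 * exp (-γ * p.1 / 2)) := by
      gcongr
      linarith [hEs0 p.2.1]
    have := mul_le_mul_of_nonneg_left hexp hε.le
    linarith
  · refine ⟨ht₀.1, le_rfl, hx₀, by simp, ?_, by simpa using le_abs_self _, rfl⟩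
    have := mul_pos hε (exp_pos (-γ * t₀ / 2))
    change _ ≤ ξ₀.1
    linarith
end

section
/- Let T̂ > 0, R ∈ ℝ, u∞ ∈ ℝ and θ∞ > 0. Let E : [0,T̂] × [0,∞) → ℝ be continuous with ĉ₀ := sup |E| < ∞. Let F̂ : [0,T̂] × [0,∞) × ℝ³ → ℝ be continuous with F̂(t,x,ξ) = 0 whenever ξ₁ > R. Suppose f : [0,T̂] × [0,∞) × ℝ³ → ℝ is C¹, satisfies ∂_t f + ξ₁ ∂_x f + E ∂_{ξ₁} f − ((ξ₁ − u∞)/(2θ∞)) E f = F̂ on (0,T̂) × (0,∞) × ℝ³, satisfies the boundary condition f(t,0,ξ) = 0 for all t and all ξ with ξ₁ > 0, satisfies f(0,x,ξ) = 0 whenever ξ₁ > R, and satisfies sup_{t ∈ [0,T̂]} ∫₀^∞ ∫_{ℝ³} (1 + |ξ₁|)( |f(t,x,ξ)|² + |∇_{t,x,ξ} f(t,x,ξ)|² ) dξ dx < ∞. Then f(t,x,ξ) = 0 whenever ξ₁ > R + ĉ₀ t. -/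
open MeasureTheory Real Set Filter

/-- A solution of a linear transport equation on a compact set `K` vanishes if, at every point of
`K` where it is nonzero, the backward characteristic direction points into `K`. -/
lemma eq_zero_of_transport_of_backward_mem_s15 {V : Type*} [NormedAddCommGroup V] [NormedSpace ℝ V]
    {K : Set (ℝ × V)} (hK : IsCompact K) {G a : ℝ × V → ℝ} (hG : Differentiable ℝ G)
    {b : ℝ × V → V} {A : ℝ} (ha : ∀ p ∈ K, a p ≤ A)
    (htr : ∀ p ∈ K, fderiv ℝ G p (1, b p) = a p * G p)
    (hback : ∀ p ∈ K, G p ≠ 0 → ∀ᶠ h in nhdsWithin (0 : ℝ) (Ioi 0), p - h • (1, b p) ∈ K) :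
    ∀ p ∈ K, G p = 0 := by
  intro q hq
  set g : ℝ × V → ℝ := fun p => exp (-(2 * A + 1) * p.1) * G p ^ 2 with hg
  have hgc : Continuous g := by have := hG.continuous; fun_prop
  obtain ⟨p, hpK, hmax⟩ := hK.exists_isMaxOn ⟨q, hq⟩ hgc.continuousOn
  have hp : G p = 0 := by
    by_contra hne
    have hline : HasDerivAt (fun h : ℝ => p - h • ((1 : ℝ), b p)) (-((1 : ℝ), b p)) 0 := by
      simpa using ((hasDerivAt_id (0 : ℝ)).smul_const ((1 : ℝ), b p)).const_sub p
    have hGl : HasDerivAt (fun h : ℝ => G (p - h • ((1 : ℝ), b p))) (-(a p * G p)) 0 := by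
      have hGp : HasFDerivAt G (fderiv ℝ G p) (p - (0 : ℝ) • ((1 : ℝ), b p)) := by
        simpa using (hG p).hasFDerivAt
      have := hGp.comp_hasDerivAt (0 : ℝ) hline
      rwa [map_neg, htr p hpK] at this
    have htime : HasDerivAt (fun h : ℝ => (p - h • ((1 : ℝ), b p)).1) (-1) 0 := by
      simpa using (hasDerivAt_id (0 : ℝ)).const_sub p.1
    have hgl : HasDerivAt (fun h : ℝ => g (p - h • ((1 : ℝ), b p)))
        ((2 * A + 1 - 2 * a p) * g p) 0 := by
      have := (htime.const_mul (-(2 * A + 1))).exp.mul (hGl.pow 2)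
      refine this.congr_deriv ?_
      simp only [hg, zero_smul, sub_zero, Pi.pow_apply]
      push_cast
      ring
    have hpos : 0 < (2 * A + 1 - 2 * a p) * g p :=
      mul_pos (by linarith [ha p hpK]) (by positivity)
    have hslope := hasDerivWithinAt_iff_tendsto_slope.1 (hgl.hasDerivWithinAt (s := Ioi 0))
    rw [sdiff_singleton_eq_self (by simp)] at hslope
    obtain ⟨h, hs, hKh, hh⟩ := ((hslope.eventually (lt_mem_nhds hpos)).and
      ((hback p hpK hne).and self_mem_nhdsWithin)).exists
    have hle : g (p - h • ((1 : ℝ), b p)) ≤ g p := hmax hKh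
    have hh' : 0 < h := hh
    rw [slope_def_field] at hs
    simp only [zero_smul, sub_zero] at hs
    exact hs.not_ge (div_nonpos_of_nonpos_of_nonneg (by linarith) hh'.le)
  have hgq : g q ≤ g p := hmax hq
  have hgp : g p = 0 := by simp [hg, hp]
  have hsq : G q ^ 2 ≤ 0 := nonpos_of_mul_nonpos_right (hgp ▸ hgq) (exp_pos _)
  exact pow_eq_zero_iff two_ne_zero |>.1 (le_antisymm hsq (sq_nonneg _))

/-- The total derivative of a function of `(t, x, v)` in terms of its partial derivatives. -/
lemma fderiv_apply_eq_partial_derivs {G : ℝ × ℝ × ℝ → ℝ} (hG : Differentiable ℝ G)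
    (t x v α β γ : ℝ) :
    fderiv ℝ G (t, x, v) (α, β, γ) = α * deriv (fun s => G (s, x, v)) t
      + β * deriv (fun y => G (t, y, v)) x + γ * deriv (fun w => G (t, x, w)) v := by
  have hp := (hG (t, x, v)).hasFDerivAt
  have h1 := (hp.comp_hasDerivAt t
    ((hasDerivAt_id t).prodMk (hasDerivAt_const t (x, v)))).deriv
  have h2 := (hp.comp_hasDerivAt x
    ((hasDerivAt_const x t).prodMk ((hasDerivAt_id x).prodMk (hasDerivAt_const x v)))).deriv
  have h3 := (hp.comp_hasDerivAt v
    ((hasDerivAt_const v t).prodMk ((hasDerivAt_const v x).prodMk (hasDerivAt_id v)))).deriv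
  simp only [Function.comp_def, id] at h1 h2 h3
  rw [h1, h2, h3, ← smul_eq_mul, ← smul_eq_mul, ← smul_eq_mul, ← map_smul, ← map_smul, ← map_smul,
    ← map_add, ← map_add]
  simp

/-- The domain of dependence of `(t₀, x₀, v₀)` on the half-line `x ≥ 0`, for spatial speed at most
`M` and acceleration at most `c`. -/
def dependenceCone (c M t₀ x₀ v₀ : ℝ) : Set (ℝ × ℝ × ℝ) :=
  {p | p.1 ∈ Icc 0 t₀ ∧ 0 ≤ p.2.1 ∧ |p.2.1 - x₀| ≤ M * (t₀ - p.1) ∧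
    |p.2.2 - v₀| ≤ c * (t₀ - p.1)}

lemma isCompact_dependenceCone {c M : ℝ} (hc : 0 ≤ c) (hM : 0 ≤ M) (t₀ x₀ v₀ : ℝ) :
    IsCompact (dependenceCone c M t₀ x₀ v₀) := by
  refine (isCompact_Icc.prod (isCompact_Icc.prod isCompact_Icc)).of_isClosed_subset
    (s := Icc 0 t₀ ×ˢ Icc (x₀ - M * t₀) (x₀ + M * t₀) ×ˢ Icc (v₀ - c * t₀) (v₀ + c * t₀)) ?_ ?_
  · have h1 : IsClosed {p : ℝ × ℝ × ℝ | 0 ≤ p.2.1} := isClosed_le (by fun_prop) (by fun_prop)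
    have h2 : IsClosed {p : ℝ × ℝ × ℝ | |p.2.1 - x₀| ≤ M * (t₀ - p.1)} :=
      isClosed_le (by fun_prop) (by fun_prop)
    have h3 : IsClosed {p : ℝ × ℝ × ℝ | |p.2.2 - v₀| ≤ c * (t₀ - p.1)} :=
      isClosed_le (by fun_prop) (by fun_prop)
    exact (isClosed_Icc.preimage continuous_fst).inter (h1.inter (h2.inter h3))
  · rintro ⟨t, x, v⟩ ⟨ht, -, hx, hv⟩
    simp only [abs_le] at hx hv ht
    have h1 : 0 ≤ M * t := mul_nonneg hM ht.1
    have h2 : 0 ≤ c * t := mul_nonneg hc ht.1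
    refine ⟨ht, ⟨?_, ?_⟩, ?_, ?_⟩ <;> dsimp only <;> nlinarith

/-- Backward characteristics stay in the domain of dependence, except possibly at the initial time
and at the incoming boundary. -/
lemma eventually_sub_smul_mem_dependenceCone {c M t₀ x₀ v₀ t x v e : ℝ}
    (hp : (t, x, v) ∈ dependenceCone c M t₀ x₀ v₀) (ht : t ≠ 0) (hx : x = 0 → v < 0)
    (he : |e| ≤ c) (hv : |v| ≤ M) :
    ∀ᶠ h in nhdsWithin (0 : ℝ) (Ioi 0),
      (t, x, v) - h • ((1 : ℝ), v, e) ∈ dependenceCone c M t₀ x₀ v₀ := by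
  obtain ⟨⟨ht0, htt⟩, hx0, hxx, hvv⟩ := hp
  dsimp only at ht0 htt hx0 hxx hvv
  have htpos : 0 < t := lt_of_le_of_ne ht0 ht.symm
  have hxev : ∀ᶠ h in nhdsWithin (0 : ℝ) (Ioi 0), 0 ≤ x - h * v := by
    rcases hx0.eq_or_lt' with h0 | h0
    · filter_upwards [self_mem_nhdsWithin] with h hh
      have hh' : 0 < h := hh
      nlinarith [hx h0]
    · have hc : ContinuousAt (fun h : ℝ => x - h * v) 0 := by fun_prop
      have hev := hc.eventually (lt_mem_nhds (a := 0) (by simpa using h0))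
      exact (hev.filter_mono nhdsWithin_le_nhds).mono fun _ => le_of_lt
  filter_upwards [hxev, self_mem_nhdsWithin,
    nhdsWithin_le_nhds (Iio_mem_nhds htpos)] with h hxh hh hht
  have hh' : 0 < h := hh
  have hht' : h < t := hht
  rw [abs_le] at he hv hxx hvv
  refine ⟨⟨?_, ?_⟩, ?_, ?_, ?_⟩ <;>
    simp only [Prod.smul_mk, Prod.mk_sub_mk, smul_eq_mul, mul_one, abs_le]
  · linarith
  · linarith
  · exact hxh
  · constructor <;> nlinarith
  · constructor <;> nlinarith

/-- finite propagation in velocity for the linearized Vlasov equation on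
the half-line: if the data vanish for `ξ₁ > R`, the solution vanishes for
`ξ₁ > R + ĉ₀ t`. -/
theorem velocity_support_propagation
    (Th R u θ : ℝ) (hTh : 0 < Th) (hθ : 0 < θ)
    (E : ℝ → ℝ → ℝ) (hEc : Continuous (fun p : ℝ × ℝ => E p.1 p.2))
    (c₀ : ℝ) (hc₀fin : ∀ t ∈ Set.Icc 0 Th, ∀ x ≥ (0:ℝ), |E t x| ≤ c₀)
    (F : ℝ → ℝ → ℝ × ℝ × ℝ → ℝ)
    (hFc : Continuous (fun p : ℝ × ℝ × (ℝ × ℝ × ℝ) => F p.1 p.2.1 p.2.2))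
    (hF0 : ∀ t ∈ Set.Icc 0 Th, ∀ x ≥ (0:ℝ), ∀ ξ : ℝ × ℝ × ℝ, R < ξ.1 → F t x ξ = 0)
    (f : ℝ → ℝ → ℝ × ℝ × ℝ → ℝ)
    (hf : ContDiff ℝ 1 (fun p : ℝ × ℝ × (ℝ × ℝ × ℝ) => f p.1 p.2.1 p.2.2))
    (heq : ∀ t ∈ Set.Ioo 0 Th, ∀ x > (0:ℝ), ∀ ξ : ℝ × ℝ × ℝ,
      deriv (fun s => f s x ξ) t + ξ.1 * deriv (fun y => f t y ξ) x
        + E t x * deriv (fun v => f t x (v, ξ.2)) ξ.1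
        - ((ξ.1 - u) / (2*θ)) * E t x * f t x ξ
        = F t x ξ)
    (hbc : ∀ t ∈ Set.Icc 0 Th, ∀ ξ : ℝ × ℝ × ℝ, 0 < ξ.1 → f t 0 ξ = 0)
    (hic : ∀ x ≥ (0:ℝ), ∀ ξ : ℝ × ℝ × ℝ, R < ξ.1 → f 0 x ξ = 0)
    (hsup : ∃ B : ℝ, ∀ t ∈ Set.Icc 0 Th,
      (∫⁻ x in Set.Ioi 0, ∫⁻ ξ : ℝ × ℝ × ℝ,
        ENNReal.ofReal ((1 + |ξ.1|) * ((f t x ξ)^2 +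
          ‖fderiv ℝ (fun p : ℝ × ℝ × (ℝ × ℝ × ℝ) => f p.1 p.2.1 p.2.2) (t, x, ξ)‖^2)))
        ≤ ENNReal.ofReal B) :
    ∀ t ∈ Set.Icc 0 Th, ∀ x ≥ (0:ℝ), ∀ ξ : ℝ × ℝ × ℝ,
      R + c₀ * t < ξ.1 → f t x ξ = 0 := by
  rintro t₀ ht₀ x₀ hx₀ ⟨v₀, η⟩ hv₀
  dsimp only at hv₀
  have hc₀ : 0 ≤ c₀ := (abs_nonneg _).trans (hc₀fin 0 ⟨le_rfl, hTh.le⟩ 0 le_rfl)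
  set G : ℝ × ℝ × ℝ → ℝ := fun p => f p.1 p.2.1 (p.2.2, η) with hGdef
  have hG : ContDiff ℝ 1 G := by
    have hι : ContDiff ℝ 1 (fun p : ℝ × ℝ × ℝ => (p.1, p.2.1, (p.2.2, η))) := by fun_prop
    exact hf.comp hι
  have hGd : Differentiable ℝ G := hG.differentiable one_ne_zero
  have hGc : Continuous G := hG.continuous
  have htransport : ∀ t ∈ Icc 0 Th, ∀ x ≥ (0 : ℝ), ∀ v : ℝ,
      fderiv ℝ G (t, x, v) (1, v, E t x)
        = (v - u) / (2 * θ) * E t x * G (t, x, v) + F t x (v, η) := by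
    intro t ht x hx v
    have hcl : (t, x) ∈ closure (Ioo 0 Th ×ˢ Ioi (0 : ℝ)) := by
      rw [closure_prod_eq, closure_Ioo hTh.ne, closure_Ioi]
      exact ⟨ht, hx⟩
    have hdG : Continuous (fderiv ℝ G) := hG.continuous_fderiv one_ne_zero
    have hFc' : Continuous (fun q : ℝ × ℝ => F q.1 q.2 (v, η)) :=
      hFc.comp (by fun_prop : Continuous fun q : ℝ × ℝ => (q.1, q.2, (v, η)))
    have heqOn : EqOn (fun q : ℝ × ℝ => fderiv ℝ G (q.1, q.2, v) (1, v, E q.1 q.2))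
        (fun q => (v - u) / (2 * θ) * E q.1 q.2 * G (q.1, q.2, v) + F q.1 q.2 (v, η))
        (Ioo 0 Th ×ˢ Ioi (0 : ℝ)) := by
      rintro ⟨s, y⟩ ⟨hs, hy⟩
      have := heq s hs y hy (v, η)
      dsimp only at this ⊢
      rw [fderiv_apply_eq_partial_derivs hGd]
      linarith
    exact heqOn.closure (by fun_prop) (by fun_prop) hcl
  have hbc' : ∀ t ∈ Icc 0 Th, ∀ v ≥ (0 : ℝ), G (t, 0, v) = 0 := by
    intro t ht v hv
    have heqOn : EqOn (fun w : ℝ => G (t, 0, w)) (fun _ => 0) (Ioi 0) :=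
      fun w hw => hbc t ht (w, η) hw
    exact heqOn.closure (by fun_prop) continuous_const (by rwa [closure_Ioi])
  set M : ℝ := |v₀| + c₀ * t₀ with hM
  have hM0 : 0 ≤ M := add_nonneg (abs_nonneg _) (mul_nonneg hc₀ ht₀.1)
  have hcone : ∀ p ∈ dependenceCone c₀ M t₀ x₀ v₀,
      p.1 ∈ Icc 0 Th ∧ 0 ≤ p.2.1 ∧ R < p.2.2 ∧ |p.2.2| ≤ M := by
    rintro ⟨t, x, v⟩ ⟨ht, hx, -, hv⟩
    dsimp only at ht hx hv ⊢
    have hct : 0 ≤ c₀ * t := mul_nonneg hc₀ ht.1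
    refine ⟨⟨ht.1, ht.2.trans ht₀.2⟩, hx, by linarith [(abs_le.1 hv).1], ?_⟩
    linarith [abs_sub_abs_le_abs_sub v v₀]
  refine eq_zero_of_transport_of_backward_mem_s15 (isCompact_dependenceCone hc₀ hM0 t₀ x₀ v₀) hGd
    (a := fun p => (p.2.2 - u) / (2 * θ) * E p.1 p.2.1) (b := fun p => (p.2.2, E p.1 p.2.1))
    (A := (M + |u|) / (2 * θ) * c₀) ?_ ?_ ?_ (t₀, x₀, v₀) ?_
  · rintro ⟨t, x, v⟩ hp
    obtain ⟨ht, hx, -, hv⟩ := hcone _ hp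
    dsimp only at ht hx hv ⊢
    refine (le_abs_self _).trans ?_
    rw [abs_mul, abs_div, abs_of_pos (by positivity : 0 < 2 * θ)]
    gcongr
    · exact (abs_sub _ _).trans (by gcongr)
    · exact hc₀fin t ht x hx
  · rintro ⟨t, x, v⟩ hp
    obtain ⟨ht, hx, hR, -⟩ := hcone _ hp
    simpa [hF0 t ht x hx (v, η) hR] using htransport t ht x hx v
  · rintro ⟨t, x, v⟩ hp hne
    obtain ⟨ht, hx, hR, hv⟩ := hcone _ hp
    dsimp only at ht hx hR hv ⊢
    refine eventually_sub_smul_mem_dependenceCone hp ?_ ?_ (hc₀fin t ht x hx) hv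
    · rintro rfl
      exact hne (hic x hx (v, η) hR)
    · rintro rfl
      by_contra! hv0
      exact hne (hbc' t ht v hv0)
  · exact ⟨⟨ht₀.1, le_rfl⟩, hx₀, by simp, by simp⟩
end
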